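/- Let (U,ρ) be a complete separable metric space, let g ∈ W(ℝ,U), and let t ↦ μ[·;t] be a Weyl almost periodic measure-valued function in W_1(ℝ, M(U)). Then for every δ ∈ (0,1) there exists a function f_δ ∈ W(ℝ,U) such that Mod f_δ ⊆ Mod g + Mod μ[·;·], f_δ(t) ∈ supp μ[·;t] for a.e. t ∈ ℝ, and ρ(f_δ(t), g(t)) < r_δ(g(t), μ[·;t]) + δ for a.e. t ∈ ℝ. -/

import Mathlib

open MeasureTheory Filter Topology TopologicalSpace
open scoped ENNReal Pointwise

noncomputable section

/-- The truncated ("bounded") distance `ρ'(x,y) = min {1, ρ(x,y)}` on a metric space. -/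
def bdist {α : Type*} [PseudoMetricSpace α] : α → α → ℝ := fun x y => min 1 (dist x y)

/-- The Hausdorff distance `dist_{ρ'}` (corresponding to the truncated metric `ρ'`)
between non-empty closed subsets of a metric space. -/
def clDist {α : Type*} [MetricSpace α] : Closeds α → Closeds α → ℝ :=
  fun A B => (min 1 (EMetric.hausdorffEdist (A : Set α) (B : Set α))).toReal

/-- The Hausdorff distance `dist_ρ` between (non-empty closed bounded) subsets. -/
def clbDist {α : Type*} [MetricSpace α] : Closeds α → Closeds α → ℝ :=
  fun A B => Metric.hausdorffDist (A : Set α) (B : Set α)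

/-- `D^{(d)}_{p,l}(f,g) = ( sup_ξ (1/l) ∫_ξ^{ξ+l} d(f t, g t)^p dt )^{1/p}`,
valued in `ℝ≥0∞`. -/
def weylD {α : Type*} (d : α → α → ℝ) (p l : ℝ) (f g : ℝ → α) : ℝ≥0∞ :=
  (⨆ ξ : ℝ, ENNReal.ofReal (1 / l) *
      ∫⁻ t in Set.Icc ξ (ξ + l), ENNReal.ofReal (d (f t) (g t) ^ p)) ^ (1 / p)

/-- The Weyl semimetric `D^{(d)}_p(f,g) = lim_{l → +∞} D^{(d)}_{p,l}(f,g)`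
(the limit exists; it is formalized here as a `limsup`). -/
def weylDinf {α : Type*} (d : α → α → ℝ) (p : ℝ) (f g : ℝ → α) : ℝ≥0∞ :=
  Filter.limsup (fun l => weylD d p l f g) Filter.atTop

/-- Membership in `M_p(ℝ, α)`: `f` is (strongly) measurable and
`sup_ξ ∫_ξ^{ξ+1} d(f t, x₀)^p dt < +∞`. -/
def MemMp {α : Type*} [TopologicalSpace α] (d : α → α → ℝ) (p : ℝ) (x₀ : α)
    (f : ℝ → α) : Prop :=
  AEStronglyMeasurable f MeasureTheory.volume ∧
  ∃ C : ℝ, ∀ ξ : ℝ,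
    (∫⁻ t in Set.Icc ξ (ξ + 1), ENNReal.ofReal (d (f t) x₀ ^ p)) ≤ ENNReal.ofReal C

/-- A set `T ⊆ ℝ` is relatively dense. -/
def RelDense (T : Set ℝ) : Prop := ∃ a > 0, ∀ ξ : ℝ, (Set.Icc ξ (ξ + a) ∩ T).Nonempty

/-- The set of `(ε, D^{(d)}_{p,l})`-almost periods of `f`. -/
def APeriodsL {α : Type*} (d : α → α → ℝ) (p l ε : ℝ) (f : ℝ → α) : Set ℝ :=
  {τ | weylD d p l f (fun t => f (t + τ)) < ENNReal.ofReal ε}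

/-- The set `P^{(d)}_p(ε; f)` of `(ε, D^{(d)}_p)`-almost periods of `f`. -/
def APeriods {α : Type*} (d : α → α → ℝ) (p ε : ℝ) (f : ℝ → α) : Set ℝ :=
  {τ | weylDinf d p f (fun t => f (t + τ)) < ENNReal.ofReal ε}

/-- Membership in the space `W_p(ℝ, α)` of Weyl almost periodic functions of order `p`
w.r.t. the distance `d` (with distinguished point `x₀`). -/
def MemWp {α : Type*} [TopologicalSpace α] (d : α → α → ℝ) (p : ℝ) (x₀ : α)
    (f : ℝ → α) : Prop :=
  MemMp d p x₀ f ∧ ∀ ε > 0, ∃ l > 0, RelDense (APeriodsL d p l ε f)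

/-- The module `Mod f`: the additive group of all `λ ∈ ℝ` such that `e^{iλτ_j} → 1`
for every `f`-returning sequence `{τ_j}` (a sequence with `D^{(d)}_1(f, f(·+τ_j)) → 0`,
where `d` is the relevant bounded distance). -/
def WMod {α : Type*} (d : α → α → ℝ) (f : ℝ → α) : Set ℝ :=
  {lam : ℝ | ∀ τ : ℕ → ℝ,
    Tendsto (fun j => weylDinf d 1 f (fun t => f (t + τ j))) atTop (nhds 0) →
    Tendsto (fun j => Complex.exp (Complex.I * ((lam * τ j : ℝ) : ℂ))) atTop (nhds 1)}

/-- `κ_W(T) = lim_{l → +∞} sup_ξ (1/l) meas([ξ, ξ+l] ∩ T)` (formalized as a `limsup`). -/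
def kappaW (T : Set ℝ) : ℝ≥0∞ :=
  Filter.limsup (fun l : ℝ => ⨆ ξ : ℝ,
    ENNReal.ofReal (1 / l) * MeasureTheory.volume (Set.Icc ξ (ξ + l) ∩ T)) Filter.atTop

/-- Membership in `M*_p(ℝ, α)`. -/
def MemMpStar {α : Type*} [TopologicalSpace α] (d : α → α → ℝ) (p : ℝ) (x₀ : α)
    (f : ℝ → α) : Prop :=
  MemMp d p x₀ f ∧
  ∀ ε > 0, ∃ δ > 0, ∀ T : Set ℝ, MeasurableSet T → kappaW T < ENNReal.ofReal δ →
    Filter.limsup (fun l : ℝ => ⨆ ξ : ℝ, ENNReal.ofReal (1 / l) *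
        ∫⁻ t in Set.Icc ξ (ξ + l) ∩ T, ENNReal.ofReal (d (f t) x₀ ^ p)) Filter.atTop
      < ENNReal.ofReal ε

/-- Distance from a point to a set w.r.t. the distance `d`, valued in `ℝ≥0∞`
(`∞` for the empty set). -/
def dInfDist {α : Type*} (d : α → α → ℝ) (x : α) (K : Set α) : ℝ≥0∞ :=
  ⨅ y ∈ K, ENNReal.ofReal (d x y)

/-- Membership in `W̃_p(ℝ, α)`: conditions 1) (relatively dense sets of
`(ε, D^{(d)}_p)`-almost periods) and 2) (approximate compactness of values). -/
def MemWpTilde {α : Type*} [TopologicalSpace α] (d : α → α → ℝ) (p : ℝ) (x₀ : α)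
    (f : ℝ → α) : Prop :=
  MemMp d p x₀ f ∧
  (∀ ε > 0, RelDense (APeriods d p ε f)) ∧
  (∀ ε > 0, ∀ δ > 0, ∃ K : Set α, IsCompact K ∧
      kappaW {t | ENNReal.ofReal ε ≤ dInfDist d (f t) K} < ENNReal.ofReal δ)

/-- The support of a Borel measure on a topological space. -/
def measSupport {α : Type*} [TopologicalSpace α] [MeasurableSpace α]
    (μ : Measure α) : Set α :=
  {x | ∀ V : Set α, IsOpen V → x ∈ V → 0 < μ V}

/-- `r_δ(x, μ) = inf { r > 0 : μ[U_r(x)] > δ }`. -/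
def rdelta {α : Type*} [PseudoMetricSpace α] [MeasurableSpace α]
    (x : α) (μ : Measure α) (δ : ℝ) : ℝ :=
  sInf {r : ℝ | 0 < r ∧ ENNReal.ofReal δ < μ (Metric.ball x r)}

/-- The Lévy–Prokhorov distance on Borel probability measures. -/
def lpDist {α : Type*} [MeasurableSpace α] [PseudoEMetricSpace α] :
    ProbabilityMeasure α → ProbabilityMeasure α → ℝ :=
  fun μ ν => MeasureTheory.levyProkhorovDist (μ : Measure α) (ν : Measure α)

end

/-!
The joint function `h = (g, μ)` is Weyl almost periodic, and its laws on the intervals `[0, 2ⁿ]`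
converge, in the Lévy–Prokhorov metric, to a mean law `ν` which bounds the frequency of visits of
`h` to any set, uniformly over time windows. If `φ` is continuous `ν`-almost everywhere, the points
near which `φ` oscillates are therefore rarely visited, so `φ ∘ h` is again Weyl almost periodic and
every `h`-returning sequence is `(φ ∘ h)`-returning. Such a `φ`, with `φ (x, P)` in the support of
`P` and near `x`, is a uniform limit of functions that are constant on pieces cut out by balls with
`ν`-null frontiers, each refining the previous one towards the support.

For the inclusion of moduli, let `λ` be a frequency of `f = φ ∘ h`, so that the character of `λ` is
close to `1` at the common almost periods of `g` and `μ`. Weight these almost periods separately by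
tent functions on a long interval. In the convolution of the two weights, twisting the second one by
the character of `λ` causes little cancellation, so by Plancherel both Fourier transforms are large
at a common point `x`. This splits `λ` into frequencies of `g` and of `μ` on that interval, and
compactness yields the splitting as the interval grows.
-/

open scoped FourierTransform SchwartzMap Convolution

section Plancherel

variable {V E : Type*} [NormedAddCommGroup V] [InnerProductSpace ℝ V] [FiniteDimensional ℝ V]
  [MeasurableSpace V] [BorelSpace V] [NormedAddCommGroup E] [InnerProductSpace ℂ E]

theorem continuous_fourier {f : V → E} (hf : Integrable f) : Continuous (𝓕 f) :=
  VectorFourier.fourierIntegral_continuous Real.continuous_fourierChar continuous_inner hf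

theorem norm_fourierChar_sub_one_mul_norm_fourier_le {f : V → E} (hf : Integrable f) (v w : V) :
    ‖(𝐞 (inner ℝ v w) : ℂ) - 1‖ * ‖𝓕 f w‖ ≤ ∫ s, ‖f (s + v) - f s‖ := by
  have hshift : 𝓕 (fun s => f (s + v)) w = (𝐞 (inner ℝ v w) : ℂ) • 𝓕 f w :=
    congrFun (VectorFourier.fourierIntegral_comp_add_right 𝐞 volume (innerₗ V) f v) w
  have hsub : 𝓕 (fun s => f (s + v) - f s) w = ((𝐞 (inner ℝ v w) : ℂ) - 1) • 𝓕 f w := by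
    rw [sub_smul, one_smul, ← hshift]
    simp only [Real.fourier_eq, smul_sub]
    exact integral_sub ((Real.fourierIntegral_convergent_iff w).2 (hf.comp_add_right v))
      ((Real.fourierIntegral_convergent_iff w).2 hf)
  rw [← norm_smul, ← hsub]
  exact VectorFourier.norm_fourierIntegral_le_integral_norm ..

theorem fourier_fourierChar_smul (f : V → E) (w₀ w : V) :
    𝓕 (fun v => 𝐞 (inner ℝ v w₀) • f v) w = 𝓕 f (w - w₀) := by
  simp only [Real.fourier_eq, smul_smul, ← AddChar.map_add_eq_mul, inner_sub_right, neg_sub]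
  simp only [neg_add_eq_sub]

variable [CompleteSpace E]

theorem fourier_toLp_ae_eq {f : V → E} (hf : Integrable f) (hf₂ : MemLp f 2 volume) :
    (𝓕 (hf₂.toLp f) : Lp E 2 volume) =ᵐ[volume] 𝓕 f := by
  refine ae_eq_of_integral_contDiff_smul_eq ((Lp.memLp _).locallyIntegrable one_le_two)
    (continuous_fourier hf).locallyIntegrable fun g hg hgs => ?_
  have hsupp : HasCompactSupport (fun x => (g x : ℂ)) := hgs.comp_left Complex.ofReal_zero
  let φ : 𝓢(V, ℂ) := hsupp.toSchwartzMap (Complex.ofRealCLM.contDiff.comp hg)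
  have hφ : ∀ x, φ x = g x := fun _ => rfl
  have hduality : ∫ x, 𝓕 φ x • hf₂.toLp f x = ∫ x, φ x • (𝓕 (hf₂.toLp f) : Lp E 2 volume) x := by
    simpa only [TemperedDistribution.fourier_apply, Lp.toTemperedDistribution_apply] using
      DFunLike.congr_fun (Lp.fourier_toTemperedDistribution_eq (hf₂.toLp f)) φ
  calc ∫ x, g x • (𝓕 (hf₂.toLp f) : Lp E 2 volume) x
      = ∫ x, φ x • (𝓕 (hf₂.toLp f) : Lp E 2 volume) x := by simp only [hφ, Complex.coe_smul]
    _ = ∫ x, 𝓕 φ x • f x := by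
        rw [← hduality]
        exact integral_congr_ae (by filter_upwards [hf₂.coeFn_toLp] with x hx using by rw [hx])
    _ = ∫ x, φ x • 𝓕 f x := by
        simpa using! (VectorFourier.integral_fourierIntegral_smul_eq_flip (L := innerₗ V)
          Real.continuous_fourierChar continuous_inner φ.integrable hf)
    _ = ∫ x, g x • 𝓕 f x := by simp only [hφ, Complex.coe_smul]

theorem memLp_fourier {f : V → E} (hf : Integrable f) (hf₂ : MemLp f 2 volume) :
    MemLp (𝓕 f) 2 volume :=
  (memLp_congr_ae (fourier_toLp_ae_eq hf hf₂)).1 (Lp.memLp _)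

theorem integral_norm_fourier_sq {f : V → E} (hf : Integrable f) (hf₂ : MemLp f 2 volume) :
    ∫ x, ‖𝓕 f x‖ ^ 2 = ∫ x, ‖f x‖ ^ 2 := by
  have hsq (g : V → E) (hg : MemLp g 2 volume) : ∫ x, ‖g x‖ ^ 2 = ‖hg.toLp g‖ ^ 2 := by
    rw [Lp.norm_toLp, hg.eLpNorm_eq_integral_rpow_norm two_ne_zero ENNReal.ofNat_ne_top,
      ENNReal.toReal_ofReal (by positivity), ← Real.rpow_natCast,
      ← Real.rpow_mul (by positivity)]
    simp
  have htoLp : (memLp_fourier hf hf₂).toLp (𝓕 f) = 𝓕 (hf₂.toLp f) :=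
    Lp.ext (((memLp_fourier hf hf₂).coeFn_toLp).trans (fourier_toLp_ae_eq hf hf₂).symm)
  rw [hsq _ (memLp_fourier hf hf₂), hsq _ hf₂, htoLp, Lp.norm_fourier_eq]

/-- If the Fourier transforms of `f` and `g` were never simultaneously large, the product
`𝓕 f * 𝓕 g = 𝓕 (f ⋆ g)` would have small `L²` norm. -/
theorem exists_lt_norm_fourier_of_lt_integral_convolution {f g : V → ℂ}
    (hf : Integrable f) (hf₂ : MemLp f 2 volume) (hg : Integrable g) (hg₂ : MemLp g 2 volume)
    (hfg : MemLp (f ⋆[ContinuousLinearMap.mul ℂ ℂ] g) 2 volume) {κ : ℝ}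
    (h : κ ^ 2 * ((∫ x, ‖f x‖ ^ 2) + ∫ x, ‖g x‖ ^ 2) <
      ∫ x, ‖(f ⋆[ContinuousLinearMap.mul ℂ ℂ] g) x‖ ^ 2) :
    ∃ x, κ < ‖𝓕 f x‖ ∧ κ < ‖𝓕 g x‖ := by
  by_contra! hsmall
  have hfg₁ : Integrable (f ⋆[ContinuousLinearMap.mul ℂ ℂ] g) := hf.integrable_convolution _ hg
  have hFint := (memLp_fourier hf hf₂).integrable_norm_pow two_ne_zero
  have hGint := (memLp_fourier hg hg₂).integrable_norm_pow two_ne_zero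
  refine h.not_ge ?_
  rw [← integral_norm_fourier_sq hf hf₂, ← integral_norm_fourier_sq hg hg₂,
    ← integral_norm_fourier_sq hfg₁ hfg, ← integral_add hFint hGint, ← integral_const_mul]
  refine integral_mono ((memLp_fourier hfg₁ hfg).integrable_norm_pow two_ne_zero)
    ((hFint.add hGint).const_mul _) fun x => ?_
  simp only [Real.fourier_mul_convolution_eq hf hg, norm_mul, mul_pow]
  rcases le_or_gt ‖𝓕 f x‖ κ with hx | hx
  · nlinarith [pow_le_pow_left₀ (norm_nonneg (𝓕 f x)) hx 2, sq_nonneg ‖𝓕 f x‖,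
      sq_nonneg ‖𝓕 g x‖, sq_nonneg κ]
  · nlinarith [pow_le_pow_left₀ (norm_nonneg (𝓕 g x)) (hsmall x hx) 2, sq_nonneg ‖𝓕 f x‖,
      sq_nonneg ‖𝓕 g x‖, sq_nonneg κ]

end Plancherel

theorem mul_integral_le_norm_integral_mul_fourierChar {α : Type*} [MeasurableSpace α]
    {μ : Measure α} {w θ : α → ℝ} {c : ℝ} (hw : Integrable w μ) (hw₀ : 0 ≤ w) (hθ : Measurable θ)
    (hphase : ∀ s t, w s ≠ 0 → w t ≠ 0 → c ≤ (𝐞 (θ s - θ t) : ℂ).re) :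
    c * ∫ s, w s ∂μ ≤ ‖∫ s, w s * (𝐞 (θ s) : ℂ) ∂μ‖ := by
  by_cases hzero : ∃ t, w t ≠ 0
  swap
  · push Not at hzero
    simp [hzero]
  obtain ⟨t, ht⟩ := hzero
  have hchar : Continuous fun x => (𝐞 x : ℂ) := by fun_prop
  have hmeas : AEStronglyMeasurable (fun s => (𝐞 (θ s - θ t) : ℂ)) μ :=
    (hchar.measurable.comp (hθ.sub_const _)).aestronglyMeasurable
  have hint : Integrable (fun s => w s * (𝐞 (θ s - θ t) : ℂ)) μ :=
    hw.ofReal.mul_bdd (c := 1) hmeas (.of_forall fun _ => (Circle.norm_coe _).le)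
  have hre (s : α) : (w s * (𝐞 (θ s - θ t) : ℂ)).re = w s * (𝐞 (θ s - θ t) : ℂ).re := by
    simp
  calc c * ∫ s, w s ∂μ = ∫ s, w s * c ∂μ := by rw [integral_mul_const, mul_comm]
    _ ≤ ∫ s, (w s * (𝐞 (θ s - θ t) : ℂ)).re ∂μ := by
        refine integral_mono (hw.mul_const c) hint.re fun s => ?_
        rw [hre]
        by_cases hs : w s = 0
        · simp [hs]
        · exact mul_le_mul_of_nonneg_left (hphase s t hs ht) (hw₀ s)
    _ = (∫ s, w s * (𝐞 (θ s - θ t) : ℂ) ∂μ).re := integral_re hint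
    _ ≤ ‖∫ s, w s * (𝐞 (θ s - θ t) : ℂ) ∂μ‖ := Complex.re_le_norm _
    _ = ‖∫ s, w s * (𝐞 (θ s) : ℂ) ∂μ‖ := by
        simp only [sub_eq_add_neg, AddChar.map_add_eq_mul, Circle.coe_mul, ← mul_assoc]
        rw [integral_mul_const, norm_mul, Circle.norm_coe, mul_one]

theorem integrable_indicator_Ioc_one (a b : ℝ) :
    Integrable ((Set.Ioc a b).indicator (1 : ℝ → ℝ)) :=
  (integrable_indicator_iff measurableSet_Ioc).2 (integrableOn_const (by simp))

theorem integral_indicator_Ioc_one {a b : ℝ} (h : a ≤ b) :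
    ∫ s, (Set.Ioc a b).indicator (1 : ℝ → ℝ) s = b - a := by
  rw [integral_indicator_one measurableSet_Ioc]
  simp [h]

/-- Measurable functions bounded by `1` and supported in `(0, T]`: the truncated weights whose
Fourier transforms are compared below. -/
structure IsWindow (T : ℝ) (F : ℝ → ℂ) : Prop where
  measurable : Measurable F
  norm_le_one : ∀ s, ‖F s‖ ≤ 1
  eq_zero : ∀ s ∉ Set.Ioc 0 T, F s = 0

namespace IsWindow

variable {T : ℝ} {F G : ℝ → ℂ}

theorem indicator_eq (hF : IsWindow T F) : (Set.Ioc 0 T).indicator F = F :=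
  Set.indicator_eq_self.2 fun _ hs => not_imp_comm.1 (hF.eq_zero _) hs

theorem fourierChar_smul (hF : IsWindow T F) (ν : ℝ) :
    IsWindow T fun s => 𝐞 (inner ℝ s ν) • F s where
  measurable := (Continuous.measurable (by fun_prop)).smul hF.measurable
  norm_le_one s := by simpa using hF.norm_le_one s
  eq_zero s hs := by simp [hF.eq_zero s hs]

theorem norm_le_indicator (hF : IsWindow T F) (s : ℝ) :
    ‖F s‖ ≤ (Set.Ioc 0 T).indicator 1 s := by
  by_cases hs : s ∈ Set.Ioc 0 T
  · simpa [hs] using hF.norm_le_one s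
  · simp [hs, hF.eq_zero s hs]

theorem integrable (hF : IsWindow T F) : Integrable F :=
  (integrable_indicator_Ioc_one 0 T).mono' hF.measurable.aestronglyMeasurable
    (.of_forall hF.norm_le_indicator)

theorem memLp_two (hF : IsWindow T F) : MemLp F 2 volume := by
  rw [← hF.indicator_eq, memLp_indicator_iff_restrict measurableSet_Ioc]
  exact MemLp.of_bound hF.measurable.aestronglyMeasurable 1 (.of_forall hF.norm_le_one)

theorem integral_norm_le (hT : 0 ≤ T) (hF : IsWindow T F) : ∫ s, ‖F s‖ ≤ T :=
  calc ∫ s, ‖F s‖ ≤ ∫ s, (Set.Ioc 0 T).indicator 1 s :=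
        integral_mono hF.integrable.norm (integrable_indicator_Ioc_one 0 T) hF.norm_le_indicator
    _ = T := by rw [integral_indicator_Ioc_one hT, sub_zero]

theorem integral_norm_sq_le (hT : 0 ≤ T) (hF : IsWindow T F) : ∫ s, ‖F s‖ ^ 2 ≤ T :=
  (integral_mono (hF.memLp_two.integrable_norm_pow two_ne_zero) hF.integrable.norm fun s =>
    pow_le_of_le_one (norm_nonneg _) (hF.norm_le_one s) two_ne_zero).trans (hF.integral_norm_le hT)

theorem convolution_eq_zero (hF : IsWindow T F) (hG : IsWindow T G) {y : ℝ}
    (hy : y ∉ Set.Ioc 0 (2 * T)) : (F ⋆[ContinuousLinearMap.mul ℂ ℂ] G) y = 0 := by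
  refine integral_eq_zero_of_ae (.of_forall fun s => ?_)
  by_cases hs : s ∈ Set.Ioc 0 T
  · have : y - s ∉ Set.Ioc 0 T := fun h => hy ⟨by linarith [hs.1, h.1], by linarith [hs.2, h.2]⟩
    simp [hG.eq_zero _ this]
  · simp [hF.eq_zero s hs]

theorem norm_convolution_le (hT : 0 ≤ T) (hF : IsWindow T F) (hG : IsWindow T G) (y : ℝ) :
    ‖(F ⋆[ContinuousLinearMap.mul ℂ ℂ] G) y‖ ≤ T := by
  refine (norm_integral_le_of_norm_le hF.integrable.norm (.of_forall fun s => ?_)).trans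
    (hF.integral_norm_le hT)
  simpa using mul_le_of_le_one_right (norm_nonneg (F s)) (hG.norm_le_one (y - s))

theorem memLp_convolution (hT : 0 ≤ T) (hF : IsWindow T F) (hG : IsWindow T G) :
    MemLp (F ⋆[ContinuousLinearMap.mul ℂ ℂ] G) 2 volume := by
  have hint := hF.integrable.integrable_convolution (ContinuousLinearMap.mul ℂ ℂ) hG.integrable
  have heq := Set.indicator_eq_self.2 fun y (hy : (F ⋆[ContinuousLinearMap.mul ℂ ℂ] G) y ≠ 0) =>
    not_imp_comm.1 (hF.convolution_eq_zero hG) hy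
  rw [← heq, memLp_indicator_iff_restrict measurableSet_Ioc]
  exact MemLp.of_bound hint.aestronglyMeasurable.restrict T
    (.of_forall (hF.norm_convolution_le hT hG))

theorem sq_le_integral_norm_convolution_sq (hT : 0 < T) (hF : IsWindow T F) (hG : IsWindow T G)
    {m : ℝ} (hm₀ : 0 ≤ m) (hm : m ≤ ∫ y, ‖(F ⋆[ContinuousLinearMap.mul ℂ ℂ] G) y‖) :
    m ^ 2 / (2 * T) ≤ ∫ y, ‖(F ⋆[ContinuousLinearMap.mul ℂ ℂ] G) y‖ ^ 2 := by
  set H := F ⋆[ContinuousLinearMap.mul ℂ ℂ] G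
  set a := m / (2 * T)
  have hint : Integrable fun y => ‖H y‖ :=
    (hF.integrable.integrable_convolution (ContinuousLinearMap.mul ℂ ℂ) hG.integrable).norm
  have hone := integrable_indicator_Ioc_one 0 (2 * T)
  have hpoint (y : ℝ) : 2 * a * ‖H y‖ - a ^ 2 * (Set.Ioc 0 (2 * T)).indicator 1 y ≤ ‖H y‖ ^ 2 := by
    by_cases hy : y ∈ Set.Ioc 0 (2 * T)
    · simp only [Set.indicator_of_mem hy, Pi.one_apply]
      nlinarith [sq_nonneg (‖H y‖ - a)]
    · simp [hy, H, hF.convolution_eq_zero hG hy]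
  calc m ^ 2 / (2 * T) = 2 * a * m - a ^ 2 * (2 * T) := by simp only [a]; field_simp; ring
    _ ≤ 2 * a * (∫ y, ‖H y‖) - a ^ 2 * ∫ y, (Set.Ioc 0 (2 * T)).indicator 1 y := by
        rw [integral_indicator_Ioc_one (by positivity), sub_zero]
        gcongr
    _ = ∫ y, (2 * a * ‖H y‖ - a ^ 2 * (Set.Ioc 0 (2 * T)).indicator 1 y) := by
        rw [integral_sub (hint.const_mul _) (hone.const_mul _), integral_const_mul,
          integral_const_mul]
    _ ≤ ∫ y, ‖H y‖ ^ 2 := integral_mono ((hint.const_mul _).sub (hone.const_mul _))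
        ((hF.memLp_convolution hT.le hG).integrable_norm_pow two_ne_zero) hpoint

theorem exists_lt_norm_fourier (hT : 0 < T) (hF : IsWindow T F) (hG : IsWindow T G) {m : ℝ}
    (hm₀ : 0 < m) (hm : m ≤ ∫ y, ‖(F ⋆[ContinuousLinearMap.mul ℂ ℂ] G) y‖) :
    ∃ x, m / (3 * T) < ‖𝓕 F x‖ ∧ m / (3 * T) < ‖𝓕 G x‖ := by
  refine exists_lt_norm_fourier_of_lt_integral_convolution hF.integrable hF.memLp_two
    hG.integrable hG.memLp_two (hF.memLp_convolution hT.le hG) ?_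
  calc (m / (3 * T)) ^ 2 * ((∫ s, ‖F s‖ ^ 2) + ∫ s, ‖G s‖ ^ 2)
      ≤ (m / (3 * T)) ^ 2 * (T + T) := by
        gcongr
        exacts [hF.integral_norm_sq_le hT.le, hG.integral_norm_sq_le hT.le]
    _ < m ^ 2 / (2 * T) := by
        rw [div_pow, div_mul_eq_mul_div, div_lt_div_iff₀ (by positivity) (by positivity)]
        nlinarith [mul_pos (pow_pos hm₀ 2) (pow_pos hT 2)]
    _ ≤ _ := hF.sq_le_integral_norm_convolution_sq hT hG hm₀.le hm

theorem norm_comp_add_right_sub_le (hF : IsWindow T F) {τ D : ℝ} (hD : 0 ≤ D)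
    (h : ∀ s ∈ Set.Ioc 0 T, s + τ ∈ Set.Ioc 0 T → ‖F (s + τ) - F s‖ ≤ D) (s : ℝ) :
    ‖F (s + τ) - F s‖ ≤ D * (Set.Ioc 0 T).indicator 1 s + (Set.Ioc (-|τ|) |τ|).indicator 1 s +
      (Set.Ioc (T - |τ|) (T + |τ|)).indicator 1 s := by
  have hnonneg (a b : ℝ) : 0 ≤ (Set.Ioc a b).indicator (1 : ℝ → ℝ) s :=
    Set.indicator_nonneg (fun _ _ => zero_le_one) s
  have h₁ := hnonneg 0 T
  have h₂ := hnonneg (-|τ|) |τ|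
  have h₃ := hnonneg (T - |τ|) (T + |τ|)
  have hends (hs : s ∈ Set.Ioc 0 T ↔ s + τ ∉ Set.Ioc 0 T) :
      1 ≤ (Set.Ioc (-|τ|) |τ|).indicator (1 : ℝ → ℝ) s +
        (Set.Ioc (T - |τ|) (T + |τ|)).indicator 1 s := by
    have hmem : s ∈ Set.Ioc (-|τ|) |τ| ∨ s ∈ Set.Ioc (T - |τ|) (T + |τ|) := by
      simp only [Set.mem_Ioc] at hs ⊢
      grind [le_abs_self τ, neg_abs_le τ]
    rcases hmem with hmem | hmem <;> simp only [Set.indicator_of_mem hmem, Pi.one_apply] <;>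
      linarith
  by_cases hs : s ∈ Set.Ioc 0 T <;> by_cases hsτ : s + τ ∈ Set.Ioc 0 T
  · have := h s hs hsτ
    simp only [Set.indicator_of_mem hs, Pi.one_apply]
    linarith
  · have := hF.norm_le_one s
    have := hends (by tauto)
    simp only [hF.eq_zero _ hsτ, zero_sub, norm_neg]
    linarith [mul_nonneg hD h₁]
  · have := hF.norm_le_one (s + τ)
    have := hends (by tauto)
    simp only [hF.eq_zero _ hs, sub_zero]
    linarith [mul_nonneg hD h₁]
  · simp only [hF.eq_zero _ hs, hF.eq_zero _ hsτ, sub_zero, norm_zero]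
    positivity

theorem integral_norm_comp_add_right_sub_le (hT : 0 ≤ T) (hF : IsWindow T F) {τ D : ℝ}
    (hD : 0 ≤ D) (h : ∀ s ∈ Set.Ioc 0 T, s + τ ∈ Set.Ioc 0 T → ‖F (s + τ) - F s‖ ≤ D) :
    ∫ s, ‖F (s + τ) - F s‖ ≤ D * T + 4 * |τ| := by
  have hint := @integrable_indicator_Ioc_one
  refine (integral_mono ((hF.integrable.comp_add_right τ).sub hF.integrable).norm
    ((((hint 0 T).const_mul D).add (hint _ _)).add (hint _ _))
    (hF.norm_comp_add_right_sub_le hD h)).trans_eq ?_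
  rw [integral_add' (((hint 0 T).const_mul D).add (hint _ _)) (hint _ _),
    integral_add' ((hint 0 T).const_mul D) (hint _ _), integral_const_mul,
    integral_indicator_Ioc_one hT,
    integral_indicator_Ioc_one (by linarith [abs_nonneg τ]),
    integral_indicator_Ioc_one (by linarith [abs_nonneg τ])]
  ring

end IsWindow

theorem mul_integral_mul_integral_le_integral_norm_convolution {f g : ℝ → ℝ} {c ν : ℝ}
    (hf : Integrable f) (hg : Integrable g) (hf₀ : 0 ≤ f) (hg₀ : 0 ≤ g)
    (hphase : ∀ y s t, f s ≠ 0 → f t ≠ 0 → g (y - s) ≠ 0 → g (y - t) ≠ 0 →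
      c ≤ (𝐞 (inner ℝ (t - s) ν) : ℂ).re) :
    c * ((∫ s, f s) * ∫ s, g s) ≤ ∫ y, ‖((fun s => (f s : ℂ)) ⋆[ContinuousLinearMap.mul ℂ ℂ]
      fun s => 𝐞 (inner ℝ s ν) • (g s : ℂ)) y‖ := by
  have hgexp : Integrable fun s => 𝐞 (inner ℝ s ν) • (g s : ℂ) := by
    have hgC : Integrable fun s => (g s : ℂ) := hg.ofReal
    refine hgC.mono ?_ (.of_forall fun s => by simp)
    exact (Continuous.aestronglyMeasurable (by fun_prop)).smul hgC.aestronglyMeasurable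
  calc c * ((∫ s, f s) * ∫ s, g s)
      = ∫ y, c * (f ⋆[ContinuousLinearMap.mul ℝ ℝ] g) y := by
        rw [integral_const_mul, integral_convolution _ hf hg, ContinuousLinearMap.mul_apply']
    _ ≤ _ := by
      refine integral_mono_ae ((hf.integrable_convolution _ hg).const_mul c)
        (hf.ofReal.integrable_convolution _ hgexp).norm ?_
      filter_upwards [hf.ae_convolution_exists (ContinuousLinearMap.mul ℝ ℝ) hg] with y hy
      have h := mul_integral_le_norm_integral_mul_fourierChar (c := c)
        (w := fun s => f s * g (y - s)) (θ := fun s => inner ℝ (y - s) ν) hy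
        (fun s => mul_nonneg (hf₀ s) (hg₀ _))
        (by fun_prop) fun s t hs ht => by
          rw [← inner_sub_left, sub_sub_sub_cancel_left]
          exact hphase y s t (left_ne_zero_of_mul hs) (left_ne_zero_of_mul ht)
            (right_ne_zero_of_mul hs) (right_ne_zero_of_mul ht)
      refine h.trans_eq ?_
      simp only [convolution_def, ContinuousLinearMap.mul_apply', Circle.smul_def, smul_eq_mul,
        Complex.ofReal_mul, mul_assoc, mul_comm (𝐞 _ : ℂ)]

/-- A continuous seminorm on `ℝ` with relatively dense sublevel sets. The example to have in mind
is `τ ↦ D(f, f(· + τ))` for a Weyl almost periodic function `f`. -/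
structure IsAlmostPeriodicSeminorm (d : AddGroupSeminorm ℝ) : Prop where
  continuous : Continuous d
  relDense : ∀ ε > 0, RelDense {τ | d τ < ε}

/-- The tent `max 0 (1 - d / η)` over the sublevel set `{d < η}`. -/
noncomputable def tent (d : AddGroupSeminorm ℝ) (η s : ℝ) : ℝ := max 0 (1 - d s / η)

section Tent

variable {d : AddGroupSeminorm ℝ} {η : ℝ}

theorem tent_nonneg (s : ℝ) : 0 ≤ tent d η s := le_max_left _ _

theorem tent_le_one (hη : 0 < η) (s : ℝ) : tent d η s ≤ 1 :=
  max_le zero_le_one (sub_le_self _ (div_nonneg (apply_nonneg d s) hη.le))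

theorem lt_of_tent_ne_zero (hη : 0 < η) {s : ℝ} (hs : tent d η s ≠ 0) : d s < η := by
  by_contra! h
  exact hs (max_eq_left (sub_nonpos.2 ((one_le_div hη).2 h)))

theorem half_le_tent (hη : 0 < η) {s : ℝ} (hs : d s ≤ η / 2) : 1 / 2 ≤ tent d η s := by
  refine le_max_of_le_right ?_
  have : d s / η ≤ 1 / 2 := (div_le_iff₀ hη).2 (by linarith)
  linarith

theorem abs_tent_add_sub_tent_le (hη : 0 < η) (s τ : ℝ) :
    |tent d η (s + τ) - tent d η s| ≤ d τ / η := by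
  have h : |d s - d (s + τ)| ≤ d τ := by
    have := abs_sub_map_le_sub d (s + τ) s
    rwa [add_sub_cancel_left, abs_sub_comm] at this
  calc |tent d η (s + τ) - tent d η s|
      ≤ |(1 - d (s + τ) / η) - (1 - d s / η)| := by
        have := abs_max_sub_max_le_abs (1 - d (s + τ) / η) (1 - d s / η) 0
        rwa [max_comm, max_comm (1 - d s / η)] at this
    _ = |d s - d (s + τ)| / η := by
        rw [sub_sub_sub_cancel_left, ← sub_div, abs_div, abs_of_pos hη]
    _ ≤ d τ / η := by gcongr

theorem continuous_tent (hd : Continuous d) : Continuous (tent d η) :=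
  continuous_const.max (continuous_const.sub (hd.div_const η))

theorem exists_le_integral_tent (hd : IsAlmostPeriodicSeminorm d) (hη : 0 < η) :
    ∃ p₀ > 0, ∃ c > 0, ∀ p ≥ p₀, ∀ ξ, c ≤ ∫ s in ξ..ξ + p, tent d η s := by
  obtain ⟨θ, hθ, hsmall⟩ := Metric.eventually_nhds_iff.1
    ((hd.continuous.tendsto' 0 0 (map_zero d)).eventually (gt_mem_nhds (by positivity : 0 < η / 4)))
  obtain ⟨a, ha, hdense⟩ := hd.relDense (η / 4) (by positivity)
  have hint (u v : ℝ) : IntervalIntegrable (tent d η) volume u v :=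
    (continuous_tent hd.continuous).intervalIntegrable u v
  refine ⟨a + θ, by positivity, θ / 2 * (1 / 2), by positivity, fun p hp ξ => ?_⟩
  obtain ⟨τ, ⟨hξτ, hτξ⟩, hτ : d τ < η / 4⟩ := hdense ξ
  calc θ / 2 * (1 / 2) = ∫ _ in τ..τ + θ / 2, (1 / 2 : ℝ) := by simp
    _ ≤ ∫ s in τ..τ + θ / 2, tent d η s := by
        refine intervalIntegral.integral_mono_on (by linarith) (by simp) (hint _ _)
          fun s hs => half_le_tent hη ?_
        have hdist : d (s - τ) < η / 4 := hsmall (by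
          rw [Real.dist_0_eq_abs, abs_of_nonneg] <;> linarith [hs.1, hs.2])
        have := map_add_le_add d (s - τ) τ
        rw [sub_add_cancel] at this
        linarith
    _ ≤ ∫ s in ξ..ξ + p, tent d η s :=
        intervalIntegral.integral_mono_interval hξτ (by linarith) (by linarith)
          (.of_forall tent_nonneg) (hint _ _)

end Tent

/-- The tent over `{d < η}` cut off to `(0, T]`. -/
noncomputable def tentWindow (d : AddGroupSeminorm ℝ) (η T : ℝ) : ℝ → ℝ :=
  (Set.Ioc 0 T).indicator (tent d η)

section TentWindow

variable {d : AddGroupSeminorm ℝ} {η T : ℝ}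

theorem tentWindow_nonneg : 0 ≤ tentWindow d η T :=
  Set.indicator_nonneg fun s _ => tent_nonneg s

theorem isWindow_tentWindow (hd : Continuous d) (hη : 0 < η) :
    IsWindow T fun s => (tentWindow d η T s : ℂ) where
  measurable := Complex.measurable_ofReal.comp
    ((continuous_tent hd).measurable.indicator measurableSet_Ioc)
  norm_le_one s := by
    rw [Complex.norm_real, Real.norm_of_nonneg (tentWindow_nonneg s)]
    exact Set.indicator_le' (fun s _ => tent_le_one hη s) (fun _ _ => zero_le_one) s
  eq_zero s hs := by simp [tentWindow, Set.indicator_of_notMem hs]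

theorem lt_of_tentWindow_ne_zero (hη : 0 < η) {s : ℝ} (hs : tentWindow d η T s ≠ 0) : d s < η :=
  lt_of_tent_ne_zero hη fun h => hs (Set.indicator_apply_eq_zero.2 fun _ => h)

theorem integral_tentWindow (hT : 0 ≤ T) :
    ∫ s, tentWindow d η T s = ∫ s in (0 : ℝ)..T, tent d η s := by
  rw [intervalIntegral.integral_of_le hT, ← integral_indicator measurableSet_Ioc, tentWindow]

theorem exists_le_integral_tentWindow (hd : IsAlmostPeriodicSeminorm d) (hη : 0 < η) :
    ∃ p₀ > 0, ∃ c > 0, ∀ p ≥ p₀, ∀ n : ℕ, n * c ≤ ∫ s, tentWindow d η (n * p) s := by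
  obtain ⟨p₀, hp₀, c, hc, h⟩ := exists_le_integral_tent hd hη
  refine ⟨p₀, hp₀, c, hc, fun p hp n => ?_⟩
  have hp' : 0 < p := hp₀.trans_le hp
  rw [integral_tentWindow (by positivity)]
  induction n with
  | zero => simp
  | succ n ih =>
    have hint (u v : ℝ) : IntervalIntegrable (tent d η) volume u v :=
      (continuous_tent hd.continuous).intervalIntegrable u v
    push_cast
    rw [← intervalIntegral.integral_add_adjacent_intervals (hint 0 (n * p)) (hint _ _), add_one_mul,
      add_one_mul]
    exact add_le_add ih (h p hp _)

theorem norm_fourierChar_sub_one_le_of_lt_norm_fourier (hd : Continuous d) (hη : 0 < η)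
    (hT : 0 < T) {κ x : ℝ} (hκ : 0 < κ)
    (hx : κ * T < ‖𝓕 (fun s => (tentWindow d η T s : ℂ)) x‖) (τ : ℝ) :
    ‖(𝐞 (τ * x) : ℂ) - 1‖ ≤ 1 / (η * κ) * d τ + 4 / (κ * T) * |τ| := by
  have hW : IsWindow T fun s => (tentWindow d η T s : ℂ) := isWindow_tentWindow hd hη
  have hnear : ∀ s ∈ Set.Ioc 0 T, s + τ ∈ Set.Ioc 0 T →
      ‖(tentWindow d η T (s + τ) : ℂ) - tentWindow d η T s‖ ≤ d τ / η := fun s hs hsτ => by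
    rw [tentWindow, Set.indicator_of_mem hs, Set.indicator_of_mem hsτ, ← Complex.ofReal_sub,
      Complex.norm_real]
    exact abs_tent_add_sub_tent_le hη s τ
  have hfourier := norm_fourierChar_sub_one_mul_norm_fourier_le hW.integrable τ x
  rw [show inner ℝ τ x = τ * x by simp [mul_comm]] at hfourier
  have hshift := hW.integral_norm_comp_add_right_sub_le hT.le
    (div_nonneg (apply_nonneg d τ) hη.le) hnear
  calc ‖(𝐞 (τ * x) : ℂ) - 1‖ ≤ (d τ / η * T + 4 * |τ|) / (κ * T) := by
        rw [le_div_iff₀ (by positivity)]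
        exact (mul_le_mul_of_nonneg_left hx.le (norm_nonneg _)).trans (hfourier.trans hshift)
    _ = 1 / (η * κ) * d τ + 4 / (κ * T) * |τ| := by field_simp

end TentWindow

theorem half_mul_integral_tentWindow_le {d₁ d₂ : AddGroupSeminorm ℝ} {η T ν : ℝ}
    (hd₁ : Continuous d₁) (hd₂ : Continuous d₂) (hη : 0 < η)
    (hphase : ∀ τ, d₁ τ < 2 * η → d₂ τ < 2 * η → 1 / 2 ≤ (𝐞 (τ * ν) : ℂ).re) :
    1 / 2 * ((∫ s, tentWindow d₁ η T s) * ∫ s, tentWindow d₂ η T s) ≤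
      ∫ y, ‖((fun s => (tentWindow d₁ η T s : ℂ)) ⋆[ContinuousLinearMap.mul ℂ ℂ]
        fun s => 𝐞 (inner ℝ s ν) • (tentWindow d₂ η T s : ℂ)) y‖ := by
  have hsub {d : AddGroupSeminorm ℝ} {u v : ℝ} (hu : d u < η) (hv : d v < η) : d (u - v) < 2 * η :=
    (map_sub_le_add d u v).trans_lt (by linarith)
  refine mul_integral_mul_integral_le_integral_norm_convolution
    (by simpa using (isWindow_tentWindow hd₁ hη).integrable.re)
    (by simpa using (isWindow_tentWindow hd₂ hη).integrable.re)
    tentWindow_nonneg tentWindow_nonneg fun y s t hs ht hys hyt => ?_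
  rw [show inner ℝ (t - s) ν = (t - s) * ν by simp [mul_comm]]
  refine hphase _ (hsub (lt_of_tentWindow_ne_zero hη ht) (lt_of_tentWindow_ne_zero hη hs)) ?_
  rw [← sub_sub_sub_cancel_left s t y]
  exact hsub (lt_of_tentWindow_ne_zero hη hys) (lt_of_tentWindow_ne_zero hη hyt)

theorem exists_lt_norm_fourier_tentWindow {d₁ d₂ : AddGroupSeminorm ℝ} {η ν : ℝ}
    (hd₁ : IsAlmostPeriodicSeminorm d₁) (hd₂ : IsAlmostPeriodicSeminorm d₂) (hη : 0 < η)
    (hphase : ∀ τ, d₁ τ < 2 * η → d₂ τ < 2 * η → 1 / 2 ≤ (𝐞 (τ * ν) : ℂ).re) :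
    ∃ p > 0, ∃ κ > 0, ∀ n : ℕ, 0 < n → ∃ x,
      κ * (n * p) < ‖𝓕 (fun s => (tentWindow d₁ η (n * p) s : ℂ)) x‖ ∧
      κ * (n * p) < ‖𝓕 (fun s => (tentWindow d₂ η (n * p) s : ℂ)) (x - ν)‖ := by
  obtain ⟨p₁, hp₁, c₁, hc₁, h₁⟩ := exists_le_integral_tentWindow hd₁ hη
  obtain ⟨p₂, -, c₂, hc₂, h₂⟩ := exists_le_integral_tentWindow hd₂ hη
  set p := max p₁ p₂
  have hp : 0 < p := lt_max_of_lt_left hp₁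
  refine ⟨p, hp, c₁ * c₂ / (6 * p ^ 2), by positivity, fun n hn => ?_⟩
  have : (0 : ℝ) < n := Nat.cast_pos.2 hn
  have hW₁ := isWindow_tentWindow (T := n * p) hd₁.continuous hη
  have hW₂ := isWindow_tentWindow (T := n * p) hd₂.continuous hη
  have hmass : 1 / 2 * ((n * c₁) * (n * c₂)) ≤ 1 / 2 *
      ((∫ s, tentWindow d₁ η (n * p) s) * ∫ s, tentWindow d₂ η (n * p) s) := by
    gcongr
    exacts [integral_nonneg tentWindow_nonneg, h₁ p (le_max_left _ _) n, h₂ p (le_max_right _ _) n]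
  have hconv := half_mul_integral_tentWindow_le (T := n * p) hd₁.continuous hd₂.continuous hη hphase
  obtain ⟨x, hx₁, hx₂⟩ := hW₁.exists_lt_norm_fourier (by positivity) (hW₂.fourierChar_smul ν)
    (by positivity) (hmass.trans hconv)
  have hκ : 1 / 2 * ((n * c₁) * (n * c₂)) / (3 * (n * p)) = c₁ * c₂ / (6 * p ^ 2) * (n * p) := by
    field_simp
    ring
  rw [hκ] at hx₁ hx₂
  exact ⟨x, hx₁, by rwa [fourier_fourierChar_smul] at hx₂⟩

theorem exists_half_le_re_fourierChar {d₁ d₂ : AddGroupSeminorm ℝ} {ν : ℝ}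
    (h : ∀ τ : ℕ → ℝ, Tendsto (fun j => d₁ (τ j)) atTop (𝓝 0) →
      Tendsto (fun j => d₂ (τ j)) atTop (𝓝 0) →
      Tendsto (fun j => (𝐞 (τ j * ν) : ℂ)) atTop (𝓝 1)) :
    ∃ η > 0, ∀ τ, d₁ τ < 2 * η → d₂ τ < 2 * η → 1 / 2 ≤ (𝐞 (τ * ν) : ℂ).re := by
  by_contra! hbad
  choose τ hτ₁ hτ₂ hτ using fun n : ℕ => hbad (1 / (n + 1)) Nat.one_div_pos_of_nat
  have hzero : Tendsto (fun n : ℕ => 2 * (1 / ((n : ℝ) + 1))) atTop (𝓝 0) := by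
    simpa using tendsto_one_div_add_atTop_nhds_zero_nat.const_mul (2 : ℝ)
  have hchar := h τ (squeeze_zero (fun _ => apply_nonneg d₁ _) (fun n => (hτ₁ n).le) hzero)
    (squeeze_zero (fun _ => apply_nonneg d₂ _) (fun n => (hτ₂ n).le) hzero)
  have hre : Tendsto (fun n => (𝐞 (τ n * ν) : ℂ).re) atTop (𝓝 1) :=
    (Complex.continuous_re.tendsto 1).comp hchar
  exact absurd (le_of_tendsto' hre fun n => (hτ n).le) (by norm_num)

/-- A large frequency would make the character equal to `-1` at a small `τ`. -/
theorem exists_eventually_abs_le_of_norm_fourierChar_sub_one_le {d : AddGroupSeminorm ℝ}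
    (hd : Continuous d) {x r : ℕ → ℝ} {C : ℝ} (hr : Tendsto r atTop (𝓝 0))
    (h : ∀ᶠ n in atTop, ∀ τ, ‖(𝐞 (τ * x n) : ℂ) - 1‖ ≤ C * d τ + r n * |τ|) :
    ∃ R, ∀ᶠ n in atTop, |x n| ≤ R := by
  have hC : Tendsto (fun τ => C * d τ) (𝓝 0) (𝓝 0) :=
    (hd.const_mul C).tendsto' 0 0 (by simp)
  obtain ⟨θ, hθ, hsmall⟩ := Metric.eventually_nhds_iff.1 (hC.eventually (gt_mem_nhds one_pos))
  refine ⟨1 / θ, ?_⟩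
  filter_upwards [h, hr.eventually (gt_mem_nhds (one_div_pos.2 hθ))] with n hn hrn
  by_contra! hx
  have hx₀ : 0 < |x n| := (one_div_pos.2 hθ).trans hx
  have hx' : x n ≠ 0 := abs_pos.1 hx₀
  have hτ : |1 / (2 * x n)| = 1 / (2 * |x n|) := by simp [abs_mul]
  have hτθ : 1 / (2 * |x n|) < θ / 2 := by
    rw [div_lt_iff₀ (by positivity)]
    have := (div_lt_iff₀ hθ).1 hx
    linarith
  have hchar : (𝐞 (1 / (2 * x n) * x n) : ℂ) = -1 := by
    rw [show 1 / (2 * x n) * x n = 1 / 2 by field_simp, Real.fourierChar_apply,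
      show ((2 * Real.pi * (1 / 2) : ℝ) : ℂ) = Real.pi by push_cast; ring, Complex.exp_pi_mul_I]
  have hle := hn (1 / (2 * x n))
  have hd_lt := hsmall (y := 1 / (2 * x n)) (by rw [Real.dist_0_eq_abs, hτ]; linarith)
  have hr_le : r n * (1 / (2 * |x n|)) ≤ 1 / θ * (θ / 2) := by
    gcongr
  rw [hchar, hτ, show ‖(-1 : ℂ) - 1‖ = 2 by norm_num] at hle
  rw [show 1 / θ * (θ / 2) = 1 / 2 by field_simp] at hr_le
  linarith

theorem exists_limit_norm_fourierChar_sub_one_le {d₁ d₂ : AddGroupSeminorm ℝ}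
    (hd₁ : Continuous d₁) {x r : ℕ → ℝ} {C ν : ℝ} (hr : Tendsto r atTop (𝓝 0))
    (h₁ : ∀ᶠ n in atTop, ∀ τ, ‖(𝐞 (τ * x n) : ℂ) - 1‖ ≤ C * d₁ τ + r n * |τ|)
    (h₂ : ∀ᶠ n in atTop, ∀ τ, ‖(𝐞 (τ * (x n - ν)) : ℂ) - 1‖ ≤ C * d₂ τ + r n * |τ|) :
    ∃ y, ∀ τ, ‖(𝐞 (τ * y) : ℂ) - 1‖ ≤ C * d₁ τ ∧ ‖(𝐞 (τ * (y - ν)) : ℂ) - 1‖ ≤ C * d₂ τ := by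
  obtain ⟨R, hR⟩ := exists_eventually_abs_le_of_norm_fourierChar_sub_one_le hd₁ hr h₁
  obtain ⟨y, -, φ, hφ, hy⟩ := tendsto_subseq_of_frequently_bounded
    (Metric.isBounded_closedBall (x := (0 : ℝ)) (r := R))
    (hR.frequently.mono fun n hn => by simpa using hn)
  have hchar : Continuous fun s => ‖(𝐞 s : ℂ) - 1‖ := by fun_prop
  have hlim (D τ : ℝ) : Tendsto (fun n => C * D + r (φ n) * |τ|) atTop (𝓝 (C * D)) := by
    simpa using ((hr.comp hφ.tendsto_atTop).mul_const |τ|).const_add (C * D)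
  refine ⟨y, fun τ => ⟨le_of_tendsto_of_tendsto ?_ (hlim (d₁ τ) τ)
    ((hφ.tendsto_atTop.eventually h₁).mono fun n hn => hn τ),
    le_of_tendsto_of_tendsto ?_ (hlim (d₂ τ) τ)
    ((hφ.tendsto_atTop.eventually h₂).mono fun n hn => hn τ)⟩⟩
  · exact (hchar.tendsto _).comp (hy.const_mul τ)
  · exact (hchar.tendsto _).comp ((hy.sub_const ν).const_mul τ)

theorem norm_exp_sub_one_eq_norm_fourierChar (a τ : ℝ) :
    ‖Complex.exp (Complex.I * (a * τ : ℝ)) - 1‖ = ‖(𝐞 (τ * (a / (2 * Real.pi))) : ℂ) - 1‖ := by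
  rw [Real.fourierChar_apply, show 2 * Real.pi * (τ * (a / (2 * Real.pi))) = a * τ by field_simp,
    mul_comm]

theorem exists_add_eq_of_forall_tendsto {d₁ d₂ : AddGroupSeminorm ℝ}
    (hd₁ : IsAlmostPeriodicSeminorm d₁) (hd₂ : IsAlmostPeriodicSeminorm d₂) {ν : ℝ}
    (h : ∀ τ : ℕ → ℝ, Tendsto (fun j => d₁ (τ j)) atTop (𝓝 0) →
      Tendsto (fun j => d₂ (τ j)) atTop (𝓝 0) →
      Tendsto (fun j => (𝐞 (τ j * ν) : ℂ)) atTop (𝓝 1)) :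
    ∃ a b C : ℝ, a + b = ν ∧ ∀ τ, ‖(𝐞 (τ * a) : ℂ) - 1‖ ≤ C * d₁ τ ∧
      ‖(𝐞 (τ * b) : ℂ) - 1‖ ≤ C * d₂ τ := by
  obtain ⟨η, hη, hphase⟩ := exists_half_le_re_fourierChar h
  obtain ⟨p, hp, κ, hκ, hx⟩ := exists_lt_norm_fourier_tentWindow hd₁ hd₂ hη hphase
  choose! x hx₁ hx₂ using hx
  have hr : Tendsto (fun n : ℕ => 4 / (κ * (n * p))) atTop (𝓝 0) := by
    refine tendsto_const_nhds.div_atTop (Tendsto.const_mul_atTop hκ ?_)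
    exact tendsto_natCast_atTop_atTop.atTop_mul_const hp
  have hT {n : ℕ} (hn : 0 < n) : 0 < n * p := mul_pos (Nat.cast_pos.2 hn) hp
  obtain ⟨y, hy⟩ := exists_limit_norm_fourierChar_sub_one_le hd₁.continuous hr
    ((eventually_gt_atTop 0).mono fun n hn => norm_fourierChar_sub_one_le_of_lt_norm_fourier
      hd₁.continuous hη (hT hn) hκ (hx₁ n hn))
    ((eventually_gt_atTop 0).mono fun n hn => norm_fourierChar_sub_one_le_of_lt_norm_fourier
      hd₂.continuous hη (hT hn) hκ (hx₂ n hn))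
  refine ⟨y, ν - y, 1 / (η * κ), by ring, fun τ => ⟨(hy τ).1, ?_⟩⟩
  have hconj : ‖(𝐞 (τ * (ν - y)) : ℂ) - 1‖ = ‖(𝐞 (τ * (y - ν)) : ℂ) - 1‖ := by
    rw [show τ * (ν - y) = -(τ * (y - ν)) by ring, AddChar.map_neg_eq_inv, Circle.coe_inv_eq_conj,
      ← Complex.norm_conj, map_sub, Complex.conj_conj, map_one]
  exact hconj ▸ (hy τ).2

/-- The largest mean value of `u` over the intervals of length `l`. -/
noncomputable def supAvg (l : ℝ) (u : ℝ → ℝ≥0∞) : ℝ≥0∞ :=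
  ⨆ ξ : ℝ, ENNReal.ofReal (1 / l) * ∫⁻ t in Set.Icc ξ (ξ + l), u t

section supAvg

variable {l L : ℝ} {u v : ℝ → ℝ≥0∞}

theorem weylD_one_eq_supAvg {α : Type*} (d : α → α → ℝ) (l : ℝ) (f g : ℝ → α) :
    weylD d 1 l f g = supAvg l fun t => ENNReal.ofReal (d (f t) (g t)) := by
  simp only [weylD, supAvg, Real.rpow_one, div_one, ENNReal.rpow_one]

theorem setLIntegral_Icc_le_mul_supAvg (hl : 0 < l) (u : ℝ → ℝ≥0∞) (ξ : ℝ) :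
    ∫⁻ t in Set.Icc ξ (ξ + l), u t ≤ ENNReal.ofReal l * supAvg l u := by
  have hcancel : ENNReal.ofReal l * ENNReal.ofReal (1 / l) = 1 := by
    rw [← ENNReal.ofReal_mul hl.le, mul_one_div_cancel hl.ne', ENNReal.ofReal_one]
  calc ∫⁻ t in Set.Icc ξ (ξ + l), u t
      = ENNReal.ofReal l * (ENNReal.ofReal (1 / l) * ∫⁻ t in Set.Icc ξ (ξ + l), u t) := by
        rw [← mul_assoc, hcancel, one_mul]
    _ ≤ ENNReal.ofReal l * supAvg l u := by
        gcongr
        exact le_iSup (fun ξ => ENNReal.ofReal (1 / l) * ∫⁻ t in Set.Icc ξ (ξ + l), u t) ξ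

theorem supAvg_mono (l : ℝ) (h : u ≤ v) : supAvg l u ≤ supAvg l v :=
  iSup_mono fun _ => mul_right_mono (lintegral_mono h)

theorem supAvg_add_le (l : ℝ) (hu : Measurable u) (v : ℝ → ℝ≥0∞) :
    supAvg l (fun t => u t + v t) ≤ supAvg l u + supAvg l v := by
  refine iSup_le fun ξ => ?_
  rw [lintegral_add_left hu, mul_add]
  exact add_le_add (le_iSup_iff.2 fun _ h => h ξ) (le_iSup_iff.2 fun _ h => h ξ)

theorem supAvg_const_mul (l : ℝ) {c : ℝ≥0∞} (hc : c ≠ ∞) (u : ℝ → ℝ≥0∞) :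
    supAvg l (fun t => c * u t) = c * supAvg l u := by
  simp only [supAvg, ENNReal.mul_iSup, lintegral_const_mul' c _ hc, mul_left_comm c]

theorem supAvg_le_of_le (hl : 0 < l) {c : ℝ≥0∞} (h : ∀ t, u t ≤ c) : supAvg l u ≤ c := by
  refine iSup_le fun ξ => ?_
  calc ENNReal.ofReal (1 / l) * ∫⁻ t in Set.Icc ξ (ξ + l), u t
      ≤ ENNReal.ofReal (1 / l) * ∫⁻ _ in Set.Icc ξ (ξ + l), c := by gcongr; exact h _
    _ = ENNReal.ofReal (1 / l) * ENNReal.ofReal l * c := by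
        rw [setLIntegral_const, Real.volume_Icc, add_sub_cancel_left, mul_comm c, mul_assoc]
    _ = c := by
        rw [← ENNReal.ofReal_mul (by positivity), one_div_mul_cancel hl.ne', ENNReal.ofReal_one,
          one_mul]

theorem setLIntegral_Icc_comp_add_right (u : ℝ → ℝ≥0∞) (a b s : ℝ) :
    ∫⁻ t in Set.Icc a b, u (t + s) = ∫⁻ t in Set.Icc (a + s) (b + s), u t := by
  rw [← (measurePreserving_add_right volume s).setLIntegral_comp_preimage_emb
    (measurableEmbedding_addRight s) u, Set.preimage_add_const_Icc, add_sub_cancel_right,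
    add_sub_cancel_right]

theorem supAvg_comp_add_right (l s : ℝ) (u : ℝ → ℝ≥0∞) :
    supAvg l (fun t => u (t + s)) = supAvg l u := by
  refine (Equiv.addRight s).iSup_congr fun ξ => ?_
  rw [setLIntegral_Icc_comp_add_right, Equiv.coe_addRight, add_right_comm]

theorem setLIntegral_Icc_add_mul_eq_sum (hl : 0 ≤ l) (u : ℝ → ℝ≥0∞) (ξ : ℝ) (n : ℕ) :
    ∫⁻ t in Set.Icc ξ (ξ + n * l), u t =
      ∑ i ∈ Finset.range n, ∫⁻ t in Set.Icc (ξ + i * l) (ξ + i * l + l), u t := by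
  simp only [← setLIntegral_congr Ico_ae_eq_Icc]
  induction n with
  | zero => simp
  | succ n ih =>
    rw [Finset.sum_range_succ, ← ih, ← lintegral_union measurableSet_Ico
      (Set.Ico_disjoint_Ico_same), Set.Ico_union_Ico_eq_Ico
        (le_add_of_nonneg_right (by positivity)) (by simpa)]
    push_cast
    ring_nf

theorem supAvg_le_two_mul_supAvg (hl : 0 < l) (hL : l ≤ L) (u : ℝ → ℝ≥0∞) :
    supAvg L u ≤ 2 * supAvg l u := by
  have hL₀ : 0 < L := hl.trans_le hL
  set n := ⌈L / l⌉₊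
  have hLn : L ≤ n * l := (div_le_iff₀ hl).1 (Nat.le_ceil _)
  have hnL : (n : ℝ) * l ≤ 2 * L := by
    have := mul_lt_mul_of_pos_right (Nat.ceil_lt_add_one (a := L / l) (by positivity)) hl
    rw [add_mul, div_mul_cancel₀ _ hl.ne'] at this
    linarith
  refine iSup_le fun ξ => ?_
  calc ENNReal.ofReal (1 / L) * ∫⁻ t in Set.Icc ξ (ξ + L), u t
      ≤ ENNReal.ofReal (1 / L) * ∫⁻ t in Set.Icc ξ (ξ + n * l), u t := by gcongr
    _ ≤ ENNReal.ofReal (1 / L) * (n * (ENNReal.ofReal l * supAvg l u)) := by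
        rw [setLIntegral_Icc_add_mul_eq_sum hl.le]
        gcongr
        refine (Finset.sum_le_card_nsmul _ _ _ fun i _ =>
          setLIntegral_Icc_le_mul_supAvg hl u _).trans (by simp)
    _ = ENNReal.ofReal (1 / L * (n * l)) * supAvg l u := by
        rw [ENNReal.ofReal_mul (by positivity), ENNReal.ofReal_mul (by positivity),
          ENNReal.ofReal_natCast]
        ring
    _ ≤ 2 * supAvg l u := by
        rw [← ENNReal.ofReal_ofNat]
        gcongr
        rwa [one_div, inv_mul_le_iff₀ hL₀, mul_comm L]

end supAvg

section bdist

variable {X Y : Type*} [PseudoMetricSpace X] [PseudoMetricSpace Y]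

theorem bdist_nonneg (x y : X) : 0 ≤ bdist x y := le_min zero_le_one dist_nonneg

theorem bdist_le_one (x y : X) : bdist x y ≤ 1 := min_le_left _ _

theorem bdist_self (x : X) : bdist x x = 0 := by simp [bdist]

theorem bdist_comm (x y : X) : bdist x y = bdist y x := by rw [bdist, bdist, dist_comm]

theorem bdist_triangle (x y z : X) : bdist x z ≤ bdist x y + bdist y z := by
  have := dist_triangle x y z
  grind [bdist, dist_nonneg (x := x) (y := y), dist_nonneg (x := y) (y := z)]

theorem bdist_prod_le (x y : X × Y) : bdist x y ≤ bdist x.1 y.1 + bdist x.2 y.2 := by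
  have h₁ := bdist_nonneg x.1 y.1
  have h₂ := bdist_nonneg x.2 y.2
  rcases max_cases (dist x.1 y.1) (dist x.2 y.2) with h | h <;>
    simp only [bdist, Prod.dist_eq, h.1] at h₁ h₂ ⊢ <;> linarith

end bdist

/-- The distance, on the scale `l`, from `h` to its translate by `s`; its small values are the
almost periods of `h`. -/
noncomputable def shiftDistL {X : Type*} [PseudoMetricSpace X] (h : ℝ → X) (l s : ℝ) : ℝ≥0∞ :=
  weylD bdist 1 l h fun t => h (t + s)

/-- The Weyl distance from `h` to its translate by `s`. -/
noncomputable def shiftDist {X : Type*} [PseudoMetricSpace X] (h : ℝ → X) (s : ℝ) : ℝ≥0∞ :=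
  weylDinf bdist 1 h fun t => h (t + s)

/-- Weyl almost periodicity with respect to `bdist`, without the measurability required in
`MemWp`. -/
def WeylAP {X : Type*} [PseudoMetricSpace X] (h : ℝ → X) : Prop :=
  ∀ ε > 0, ∃ l > 0, RelDense (APeriodsL bdist 1 l ε h)

theorem limsup_add_le_limsup_add_limsup {ι : Type*} (f : Filter ι) (u v : ι → ℝ≥0∞) :
    limsup (fun i => u i + v i) f ≤ limsup u f + limsup v f := by
  refine ENNReal.le_of_forall_pos_le_add fun ε hε hfin => ?_
  obtain ⟨hu, hv⟩ := ENNReal.add_lt_top.1 hfin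
  have hε₂ : ((ε / 2 : NNReal) : ℝ≥0∞) ≠ 0 := by simpa using hε.ne'
  refine limsup_le_of_le (h := ?_)
  filter_upwards [eventually_lt_of_limsup_lt (ENNReal.lt_add_right hu.ne hε₂),
    eventually_lt_of_limsup_lt (ENNReal.lt_add_right hv.ne hε₂)] with i hui hvi
  calc u i + v i ≤ limsup u f + (ε / 2 : NNReal) + (limsup v f + (ε / 2 : NNReal)) := by gcongr
    _ = limsup u f + limsup v f + ε := by
        rw [add_add_add_comm, ← ENNReal.coe_add, add_halves]

section shiftDist

variable {X Y : Type*} [PseudoMetricSpace X] [PseudoMetricSpace Y] {h : ℝ → X} {k : ℝ → Y}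
  {l L s : ℝ}

theorem shiftDistL_eq_supAvg (h : ℝ → X) (l s : ℝ) :
    shiftDistL h l s = supAvg l fun t => ENNReal.ofReal (bdist (h t) (h (t + s))) :=
  weylD_one_eq_supAvg ..

theorem shiftDist_eq_limsup (h : ℝ → X) (s : ℝ) :
    shiftDist h s = limsup (fun l => shiftDistL h l s) atTop := rfl

theorem measurable_ofReal_bdist (hh : StronglyMeasurable h) (s : ℝ) :
    Measurable fun t => ENNReal.ofReal (bdist (h t) (h (t + s))) :=
  (measurable_const.min
    (hh.dist (hh.comp_measurable (measurable_add_const s))).measurable).ennreal_ofReal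

theorem shiftDistL_le_one (h : ℝ → X) (hl : 0 < l) (s : ℝ) : shiftDistL h l s ≤ 1 := by
  rw [shiftDistL_eq_supAvg]
  exact supAvg_le_of_le hl fun t => ENNReal.ofReal_le_one.2 (bdist_le_one _ _)

theorem shiftDistL_zero (h : ℝ → X) (l : ℝ) : shiftDistL h l 0 = 0 := by
  simp [shiftDistL_eq_supAvg, bdist_self, supAvg]

theorem shiftDistL_neg (h : ℝ → X) (l s : ℝ) : shiftDistL h l (-s) = shiftDistL h l s := by
  rw [shiftDistL_eq_supAvg, shiftDistL_eq_supAvg, ← supAvg_comp_add_right l s]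
  simp only [add_neg_cancel_right, bdist_comm]

theorem shiftDistL_add_le (hh : StronglyMeasurable h) (l s s' : ℝ) :
    shiftDistL h l (s + s') ≤ shiftDistL h l s + shiftDistL h l s' := by
  simp only [shiftDistL_eq_supAvg]
  rw [← supAvg_comp_add_right l s fun t => ENNReal.ofReal (bdist (h t) (h (t + s')))]
  refine (supAvg_mono l fun t => ?_).trans (supAvg_add_le l (measurable_ofReal_bdist hh s) _)
  rw [← ENNReal.ofReal_add (bdist_nonneg _ _) (bdist_nonneg _ _), ← add_assoc]
  exact ENNReal.ofReal_le_ofReal (bdist_triangle _ _ _)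

theorem shiftDistL_sub_le (hh : StronglyMeasurable h) (l s s' : ℝ) :
    shiftDistL h l (s - s') ≤ shiftDistL h l s + shiftDistL h l s' := by
  rw [sub_eq_add_neg, ← shiftDistL_neg h l s']
  exact shiftDistL_add_le hh l s (-s')

theorem shiftDistL_le_two_mul (h : ℝ → X) (hl : 0 < l) (hL : l ≤ L) (s : ℝ) :
    shiftDistL h L s ≤ 2 * shiftDistL h l s := by
  simp only [shiftDistL_eq_supAvg]
  exact supAvg_le_two_mul_supAvg hl hL _

theorem shiftDistL_prodMk_le (hh : StronglyMeasurable h) (k : ℝ → Y) (l s : ℝ) :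
    shiftDistL (fun t => (h t, k t)) l s ≤ shiftDistL h l s + shiftDistL k l s := by
  simp only [shiftDistL_eq_supAvg]
  refine (supAvg_mono l fun t => ?_).trans (supAvg_add_le l (measurable_ofReal_bdist hh s) _)
  rw [← ENNReal.ofReal_add (bdist_nonneg _ _) (bdist_nonneg _ _)]
  exact ENNReal.ofReal_le_ofReal (bdist_prod_le _ _)

theorem shiftDist_le_of_le {c : ℝ≥0∞} (l : ℝ) (hc : ∀ L ≥ l, shiftDistL h L s ≤ c) :
    shiftDist h s ≤ c :=
  limsup_le_of_le (h := (eventually_ge_atTop l).mono hc)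

theorem shiftDist_ne_top (h : ℝ → X) (s : ℝ) : shiftDist h s ≠ ∞ :=
  ((shiftDist_le_of_le 1 fun _ hL => shiftDistL_le_one h (zero_lt_one.trans_le hL) s).trans_lt
    ENNReal.one_lt_top).ne

theorem shiftDist_le_add {Z W : Type*} [PseudoMetricSpace Z] [PseudoMetricSpace W] {f : ℝ → Z}
    {g : ℝ → W} {a b c : ℝ}
    (hle : ∀ l, shiftDistL h l a ≤ shiftDistL f l b + shiftDistL g l c) :
    shiftDist h a ≤ shiftDist f b + shiftDist g c :=
  (limsup_le_limsup (.of_forall hle)).trans (limsup_add_le_limsup_add_limsup _ _ _)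

theorem shiftDist_le_add_mul {c C : ℝ≥0∞} (hC : C ≠ ∞) (l : ℝ)
    (hle : ∀ L ≥ l, shiftDistL k L s ≤ c + C * shiftDistL h L s) :
    shiftDist k s ≤ c + C * shiftDist h s := by
  rw [shiftDist_eq_limsup, shiftDist_eq_limsup, ← ENNReal.limsup_const_mul_of_ne_top hC]
  calc limsup (fun l => shiftDistL k l s) atTop
      ≤ limsup (fun l => c + C * shiftDistL h l s) atTop :=
        limsup_le_limsup ((eventually_ge_atTop l).mono hle)
    _ ≤ limsup (fun _ : ℝ => c) atTop + limsup (fun l => C * shiftDistL h l s) atTop :=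
        limsup_add_le_limsup_add_limsup _ _ _
    _ = _ := by rw [limsup_const]

theorem WeylAP.exists_forall_shiftDistL_lt (hh : WeylAP h) {ε : ℝ} (hε : 0 < ε) :
    ∃ l > 0, ∃ T, RelDense T ∧ ∀ L ≥ l, ∀ s ∈ T, shiftDistL h L s < ENNReal.ofReal ε := by
  obtain ⟨l, hl, hT⟩ := hh (ε / 2) (half_pos hε)
  refine ⟨l, hl, _, hT, fun L hL s hs => (shiftDistL_le_two_mul h hl hL s).trans_lt ?_⟩
  calc 2 * shiftDistL h l s < 2 * ENNReal.ofReal (ε / 2) :=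
        ENNReal.mul_lt_mul_right two_ne_zero ENNReal.ofNat_ne_top hs
    _ = ENNReal.ofReal ε := by
        rw [← ENNReal.ofReal_ofNat, ← ENNReal.ofReal_mul zero_le_two, mul_div_cancel₀ _ two_ne_zero]

/-- The Weyl distance of `h` to its translates, as a seminorm in the translation parameter. -/
noncomputable def shiftSeminorm (hh : StronglyMeasurable h) : AddGroupSeminorm ℝ where
  toFun s := (shiftDist h s).toReal
  map_zero' := by simp [shiftDist_eq_limsup, shiftDistL_zero]
  add_le' s s' := by
    rw [← ENNReal.toReal_add (shiftDist_ne_top h s) (shiftDist_ne_top h s')]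
    exact ENNReal.toReal_mono (by simp [shiftDist_ne_top])
      (shiftDist_le_add fun l => shiftDistL_add_le hh l s s')
  neg' s := by simp only [shiftDist_eq_limsup, shiftDistL_neg]

theorem shiftSeminorm_apply (hh : StronglyMeasurable h) (s : ℝ) :
    shiftSeminorm hh s = (shiftDist h s).toReal := rfl

end shiftDist

theorem tendsto_lintegral_enorm_comp_add_right_sub {E : Type*} [NormedAddCommGroup E] {f : ℝ → E}
    (hf : Integrable f) : Tendsto (fun s => ∫⁻ t, ‖f (t + s) - f t‖ₑ) (𝓝 0) (𝓝 0) := by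
  have hf₁ : MemLp f 1 volume := memLp_one_iff_integrable.2 hf
  have : Fact ((1 : ℝ≥0∞) ≠ ∞) := ⟨ENNReal.one_ne_top⟩
  have hcont : Continuous fun s : ℝ => DomAddAct.mk s +ᵥ hf₁.toLp f :=
    DomAddAct.continuous_mk.vadd continuous_const
  have hlim := (hcont.edist (continuous_const (y := hf₁.toLp f))).tendsto' 0 0
    (by rw [DomAddAct.mk_zero, zero_vadd, edist_self])
  refine hlim.congr fun s => ?_
  rw [DomAddAct.mk_vadd_toLp, Lp.edist_toLp_toLp, eLpNorm_one_eq_lintegral_enorm]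
  simp only [Pi.sub_apply, vadd_eq_add, add_comm s]

section bdistEmbedding

variable {X : Type*} [PseudoMetricSpace X]

theorem abs_bdist_sub_bdist_le (x x' y : X) : |bdist x y - bdist x' y| ≤ bdist x x' := by
  have h₁ := bdist_triangle x x' y
  have h₂ := bdist_triangle x' x y
  rw [bdist_comm x' x] at h₂
  exact abs_le.2 ⟨by linarith, by linarith⟩

theorem bdist_le_dist (x y : X) : bdist x y ≤ dist x y := min_le_right _ _

/-- The Kuratowski embedding of a metric space, equipped with the bounded metric `bdist`. -/
noncomputable def bdistEmbedding (x : X) : BoundedContinuousFunction X ℝ :=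
  .ofNormedAddCommGroup (bdist x) (continuous_const.min (continuous_const.dist continuous_id)) 1
    fun y => by rw [Real.norm_eq_abs, abs_of_nonneg (bdist_nonneg x y)]; exact bdist_le_one x y

theorem norm_bdistEmbedding_le (x : X) : ‖bdistEmbedding x‖ ≤ 1 :=
  BoundedContinuousFunction.norm_ofNormedAddCommGroup_le _ zero_le_one _

theorem dist_bdistEmbedding (x x' : X) :
    dist (bdistEmbedding x) (bdistEmbedding x') = bdist x x' := by
  refine le_antisymm ((BoundedContinuousFunction.dist_le (bdist_nonneg x x')).2
    fun y => abs_bdist_sub_bdist_le x x' y) ?_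
  calc bdist x x' = dist (bdistEmbedding x x') (bdistEmbedding x' x') := by
        change _ = |bdist x x' - bdist x' x'|
        rw [bdist_self, sub_zero, abs_of_nonneg (bdist_nonneg x x')]
    _ ≤ _ := BoundedContinuousFunction.dist_coe_le_dist x'

theorem continuous_bdistEmbedding : Continuous (bdistEmbedding : X → _) :=
  (LipschitzWith.of_dist_le' (K := 1) fun x y => by
    rw [one_mul, dist_bdistEmbedding]; exact bdist_le_dist x y).continuous

end bdistEmbedding

section WeylAP

variable {X Y : Type*} [PseudoMetricSpace X] [PseudoMetricSpace Y] {h : ℝ → X}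

theorem tendsto_lintegral_bdist_comp_add_right (hh : StronglyMeasurable h) (a b : ℝ) :
    Tendsto (fun s => ∫⁻ t in Set.Icc a b, ENNReal.ofReal (bdist (h t) (h (t + s))))
      (𝓝 0) (𝓝 0) := by
  set k := (Set.Icc (a - 1) (b + 1)).indicator fun t => bdistEmbedding (h t)
  have hk : Integrable k := by
    refine IntegrableOn.integrable_indicator (.of_bound (by simp) ?_ 1
      (.of_forall fun t => norm_bdistEmbedding_le _)) measurableSet_Icc
    exact (continuous_bdistEmbedding.comp_stronglyMeasurable hh).aestronglyMeasurable
  have hk_apply {t : ℝ} (ht₁ : a - 1 ≤ t) (ht₂ : t ≤ b + 1) : k t = bdistEmbedding (h t) :=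
    Set.indicator_of_mem (Set.mem_Icc.2 ⟨ht₁, ht₂⟩) _
  refine tendsto_of_tendsto_of_tendsto_of_le_of_le' tendsto_const_nhds
    (tendsto_lintegral_enorm_comp_add_right_sub hk) (.of_forall fun _ => zero_le) ?_
  filter_upwards [Metric.closedBall_mem_nhds (0 : ℝ) one_pos] with s hs
  rw [mem_closedBall_zero_iff, Real.norm_eq_abs, abs_le] at hs
  refine (setLIntegral_mono_ae' measurableSet_Icc (.of_forall fun t ht => ?_)).trans
    (setLIntegral_le_lintegral _ _)
  rw [hk_apply (by linarith [ht.1]) (by linarith [ht.2]),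
    hk_apply (by linarith [ht.1]) (by linarith [ht.2]), ← edist_eq_enorm_sub, edist_dist,
    dist_bdistEmbedding, bdist_comm]

theorem setLIntegral_bdist_le_add_translate (hh : StronglyMeasurable h) {l : ℝ} (hl : 0 < l)
    (ξ s τ : ℝ) :
    ∫⁻ t in Set.Icc ξ (ξ + l), ENNReal.ofReal (bdist (h t) (h (t + s))) ≤
      2 * (ENNReal.ofReal l * shiftDistL h l τ) +
        ∫⁻ t in Set.Icc (ξ + τ) (ξ + l + τ), ENNReal.ofReal (bdist (h t) (h (t + s))) := by
  set u : ℝ → ℝ → ℝ≥0∞ := fun s t => ENNReal.ofReal (bdist (h t) (h (t + s)))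
  have hu (s : ℝ) : Measurable (u s) := measurable_ofReal_bdist hh s
  have hpoint (t : ℝ) : u s t ≤ u τ t + u τ (t + s) + u s (t + τ) := by
    have h₁ := bdist_triangle (h t) (h (t + τ)) (h (t + s))
    have h₂ := bdist_triangle (h (t + τ)) (h (t + τ + s)) (h (t + s))
    rw [bdist_comm (h (t + τ + s)), add_right_comm t τ s] at h₂
    simp only [u, ← ENNReal.ofReal_add (add_nonneg (bdist_nonneg _ _) (bdist_nonneg _ _))
      (bdist_nonneg _ _), ← ENNReal.ofReal_add (bdist_nonneg _ _) (bdist_nonneg _ _)]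
    refine ENNReal.ofReal_le_ofReal ?_
    rw [add_right_comm t τ s]
    linarith
  have hτ (ξ : ℝ) : ∫⁻ t in Set.Icc ξ (ξ + l), u τ t ≤ ENNReal.ofReal l * shiftDistL h l τ := by
    rw [shiftDistL_eq_supAvg]
    exact setLIntegral_Icc_le_mul_supAvg hl _ ξ
  calc ∫⁻ t in Set.Icc ξ (ξ + l), u s t
      ≤ ∫⁻ t in Set.Icc ξ (ξ + l), (u τ t + u τ (t + s) + u s (t + τ)) := lintegral_mono hpoint
    _ = (∫⁻ t in Set.Icc ξ (ξ + l), u τ t) + (∫⁻ t in Set.Icc (ξ + s) (ξ + s + l), u τ t) +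
          ∫⁻ t in Set.Icc (ξ + τ) (ξ + l + τ), u s t := by
        have huτ : Measurable fun t => u τ t + u τ (t + s) := by fun_prop
        rw [lintegral_add_left huτ, lintegral_add_left (hu τ), setLIntegral_Icc_comp_add_right,
          setLIntegral_Icc_comp_add_right, add_right_comm ξ l s]
    _ ≤ _ := by
        rw [two_mul]
        gcongr <;> exact hτ _

/-- The integral over any interval of length `l` is compared, through an almost period, with one
over a subinterval of the fixed interval `[0, a + l]`. -/
theorem WeylAP.exists_forall_shiftDistL_lt_of_abs_lt (hh : StronglyMeasurable h) (hw : WeylAP h)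
    {ε : ℝ} (hε : 0 < ε) :
    ∃ l > 0, ∃ θ > 0, ∀ L ≥ l, ∀ s, |s| < θ → shiftDistL h L s < ENNReal.ofReal ε := by
  obtain ⟨l, hl, T, ⟨a, -, hT⟩, hper⟩ :=
    hw.exists_forall_shiftDistL_lt (show 0 < ε / 8 by positivity)
  obtain ⟨θ, hθ, hsmall⟩ := Metric.eventually_nhds_iff.1
    ((tendsto_lintegral_bdist_comp_add_right hh 0 (a + l)).eventually
      (gt_mem_nhds (show 0 < ENNReal.ofReal (l * (ε / 8)) by positivity)))
  have hscale (s : ℝ) (hs : |s| < θ) : shiftDistL h l s ≤ ENNReal.ofReal (3 * (ε / 8)) := by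
    rw [shiftDistL_eq_supAvg]
    refine iSup_le fun ξ => ?_
    obtain ⟨τ, hτ, hτT⟩ := hT (-ξ)
    have hint : ∫⁻ t in Set.Icc ξ (ξ + l), ENNReal.ofReal (bdist (h t) (h (t + s))) ≤
        2 * (ENNReal.ofReal l * ENNReal.ofReal (ε / 8)) + ENNReal.ofReal (l * (ε / 8)) := by
      refine (setLIntegral_bdist_le_add_translate hh hl ξ s τ).trans ?_
      gcongr
      · exact (hper l le_rfl τ hτT).le
      · refine (lintegral_mono_set (Set.Icc_subset_Icc ?_ ?_)).trans
          (hsmall (by rwa [Real.dist_0_eq_abs])).le <;> linarith [hτ.1, hτ.2]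
    calc ENNReal.ofReal (1 / l) * _ ≤ ENNReal.ofReal (1 / l) *
          (2 * (ENNReal.ofReal l * ENNReal.ofReal (ε / 8)) + ENNReal.ofReal (l * (ε / 8))) := by
          gcongr
      _ = ENNReal.ofReal (3 * (ε / 8)) := by
          rw [← ENNReal.ofReal_mul hl.le, ← ENNReal.ofReal_ofNat,
            ← ENNReal.ofReal_mul zero_le_two, ← ENNReal.ofReal_add (by positivity) (by positivity),
            ← ENNReal.ofReal_mul (by positivity)]
          congr 1
          field_simp
          ring
  refine ⟨l, hl, θ, hθ, fun L hL s hs => ?_⟩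
  calc shiftDistL h L s ≤ 2 * ENNReal.ofReal (3 * (ε / 8)) :=
        (shiftDistL_le_two_mul h hl hL s).trans (mul_right_mono (hscale s hs))
    _ < ENNReal.ofReal ε := by
        rw [← ENNReal.ofReal_ofNat, ← ENNReal.ofReal_mul zero_le_two,
          ENNReal.ofReal_lt_ofReal_iff hε]
        linarith

theorem RelDense.mono {S T : Set ℝ} (hS : RelDense S) (hST : S ⊆ T) : RelDense T := by
  obtain ⟨a, ha, hS⟩ := hS
  exact ⟨a, ha, fun ξ => (hS ξ).mono (Set.inter_subset_inter_right _ hST)⟩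

/-- Elements `f₁ ξ`, `f₂ ξ` of `S₁`, `S₂` are chosen near each `ξ`; the bounded differences
`f₁ ξ - f₂ ξ` have a finite `θ`-net. -/
theorem RelDense.exists_near_sub {S₁ S₂ : Set ℝ} (h₁ : RelDense S₁) (h₂ : RelDense S₂) {θ : ℝ}
    (hθ : 0 < θ) : RelDense {τ | τ ∈ S₁ - S₁ ∧ ∃ s ∈ S₂ - S₂, |τ - s| < θ} := by
  obtain ⟨a₁, ha₁, h₁⟩ := h₁
  obtain ⟨a₂, -, h₂⟩ := h₂
  choose f₁ hf₁ hf₁S using h₁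
  choose f₂ hf₂ hf₂S using h₂
  have hbdd : TotallyBounded (Set.range fun ξ => f₁ ξ - f₂ ξ) := by
    refine (totallyBounded_Icc (-a₂) a₁).subset (Set.range_subset_iff.2 fun ξ => ?_)
    constructor <;> linarith [(hf₁ ξ).1, (hf₁ ξ).2, (hf₂ ξ).1, (hf₂ ξ).2]
  obtain ⟨N, hNsub, hN, hcover⟩ := Metric.finite_approx_of_totallyBounded hbdd θ hθ
  choose! ζ hζ using fun y (hy : y ∈ N) => Set.mem_range.1 (hNsub hy)
  obtain ⟨M, hM⟩ := isBounded_iff_forall_norm_le.1 (hN.image fun y => f₁ (ζ y)).isBounded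
  refine ⟨a₁ + 2 * |M|, by positivity, fun ξ => ?_⟩
  obtain ⟨y, hy, hdist⟩ := Set.mem_iUnion₂.1 (hcover ⟨ξ + |M|, rfl⟩)
  rw [Metric.mem_ball, Real.dist_eq, ← hζ y hy] at hdist
  have hMy := abs_le.1 ((hM _ ⟨y, hy, rfl⟩).trans (le_abs_self M))
  refine ⟨f₁ (ξ + |M|) - f₁ (ζ y), ?_, Set.sub_mem_sub (hf₁S _) (hf₁S _),
    _, Set.sub_mem_sub (hf₂S (ξ + |M|)) (hf₂S (ζ y)), ?_⟩
  · constructor <;> linarith [(hf₁ (ξ + |M|)).1, (hf₁ (ξ + |M|)).2, hMy.1, hMy.2]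
  · rwa [sub_sub_sub_comm]

theorem WeylAP.prodMk {g : ℝ → X} {m : ℝ → Y} (hg : StronglyMeasurable g)
    (hm : StronglyMeasurable m) (hgw : WeylAP g) (hmw : WeylAP m) :
    WeylAP fun t => (g t, m t) := by
  intro ε hε
  have hε₅ : 0 < ε / 5 := by positivity
  obtain ⟨l₁, hl₁, T₁, hT₁, hper₁⟩ := hgw.exists_forall_shiftDistL_lt hε₅
  obtain ⟨l₂, -, T₂, hT₂, hper₂⟩ := hmw.exists_forall_shiftDistL_lt hε₅
  obtain ⟨l₃, -, θ, hθ, hsmall⟩ := hmw.exists_forall_shiftDistL_lt_of_abs_lt hm hε₅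
  obtain ⟨l, hl⟩ : ∃ l, l₁ ≤ l ∧ l₂ ≤ l ∧ l₃ ≤ l :=
    ⟨max l₁ (max l₂ l₃), le_max_left _ _, (le_max_left _ _).trans (le_max_right _ _),
      (le_max_right _ _).trans (le_max_right _ _)⟩
  refine ⟨l, hl₁.trans_le hl.1, (hT₁.exists_near_sub hT₂ hθ).mono ?_⟩
  rintro τ ⟨⟨τ₁, hτ₁, τ₁', hτ₁', rfl⟩, _, ⟨τ₂, hτ₂, τ₂', hτ₂', rfl⟩, hnear⟩
  set e := ENNReal.ofReal (ε / 5)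
  have hg_lt : shiftDistL g l (τ₁ - τ₁') < e + e :=
    (shiftDistL_sub_le hg l τ₁ τ₁').trans_lt
      (ENNReal.add_lt_add (hper₁ l hl.1 _ hτ₁) (hper₁ l hl.1 _ hτ₁'))
  have hm_lt : shiftDistL m l (τ₂ - τ₂') < e + e :=
    (shiftDistL_sub_le hm l τ₂ τ₂').trans_lt
      (ENNReal.add_lt_add (hper₂ l hl.2.1 _ hτ₂) (hper₂ l hl.2.1 _ hτ₂'))
  have hm_lt' := (shiftDistL_add_le hm l (τ₂ - τ₂') (τ₁ - τ₁' - (τ₂ - τ₂'))).trans_lt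
    (ENNReal.add_lt_add hm_lt (hsmall l hl.2.2 _ hnear))
  rw [add_sub_cancel] at hm_lt'
  calc shiftDistL (fun t => (g t, m t)) l (τ₁ - τ₁')
      ≤ shiftDistL g l (τ₁ - τ₁') + shiftDistL m l (τ₁ - τ₁') := shiftDistL_prodMk_le hg m l _
    _ < e + e + (e + e + e) := ENNReal.add_lt_add hg_lt hm_lt'
    _ = ENNReal.ofReal ε := by
        rw [show e + e + (e + e + e) = 5 * e by ring, ← ENNReal.ofReal_ofNat,
          ← ENNReal.ofReal_mul (by norm_num), mul_div_cancel₀ _ (by norm_num)]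

theorem toReal_shiftDist_lt {ε l s : ℝ} (hε : 0 < ε)
    (hs : ∀ L ≥ l, shiftDistL h L s < ENNReal.ofReal (ε / 2)) : (shiftDist h s).toReal < ε :=
  (ENNReal.toReal_le_of_le_ofReal (by positivity)
    (shiftDist_le_of_le l fun L hL => (hs L hL).le)).trans_lt (half_lt_self hε)

theorem WeylAP.isAlmostPeriodicSeminorm_shiftSeminorm (hh : StronglyMeasurable h) (hw : WeylAP h) :
    IsAlmostPeriodicSeminorm (shiftSeminorm hh) where
  continuous := by
    refine Metric.continuous_iff.2 fun s ε hε => ?_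
    obtain ⟨l, -, θ, hθ, hsmall⟩ :=
      hw.exists_forall_shiftDistL_lt_of_abs_lt hh (half_pos hε)
    refine ⟨θ, hθ, fun s' hs' => ?_⟩
    calc |shiftSeminorm hh s' - shiftSeminorm hh s| ≤ shiftSeminorm hh (s' - s) :=
          abs_sub_map_le_sub _ _ _
      _ < ε := toReal_shiftDist_lt hε fun L hL => hsmall L hL _ hs'
  relDense ε hε := by
    obtain ⟨l, -, T, hT, hper⟩ := hw.exists_forall_shiftDistL_lt (half_pos hε)
    exact hT.mono fun s hs => toReal_shiftDist_lt hε fun L hL => hper L hL s hs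

end WeylAP

section LevyProkhorov

theorem levyProkhorov_measure_le_thickening_add {Ω : Type*} [PseudoMetricSpace Ω]
    [MeasurableSpace Ω] [OpensMeasurableSpace Ω] {P Q : LevyProkhorov (ProbabilityMeasure Ω)}
    {κ : ℝ} (hPQ : dist P Q < κ) {B : Set Ω} (hB : MeasurableSet B) :
    (P.toMeasure : Measure Ω) B ≤
      (Q.toMeasure : Measure Ω) (Metric.thickening κ B) + ENNReal.ofReal κ := by
  have hκ : 0 < κ := dist_nonneg.trans_lt hPQ
  have hlt : levyProkhorovEDist (P.toMeasure : Measure Ω) Q.toMeasure < ENNReal.ofReal κ := by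
    rwa [← LevyProkhorov.edist_probabilityMeasure_def, edist_lt_ofReal]
  simpa only [ENNReal.toReal_ofReal hκ.le] using left_measure_le_of_levyProkhorovEDist_lt hlt hB

variable {Ω : Type*} [MetricSpace Ω]

theorem thickening_compl_cthickening_subset (κ : ℝ) (K : Set Ω) :
    Metric.thickening κ (Metric.cthickening κ K)ᶜ ⊆ Kᶜ := by
  intro x hx hxK
  obtain ⟨y, hy, hxy⟩ := Metric.mem_thickening_iff.1 hx
  exact hy (Metric.mem_cthickening_of_dist_le y x κ K hxK (by rw [dist_comm]; exact hxy.le))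

theorem isCompact_iInter_cthickening [CompleteSpace Ω] {K : ℕ → Set Ω} (hK : ∀ n, IsCompact (K n))
    {κ : ℕ → ℝ} (hκ : Tendsto κ atTop (𝓝 0)) :
    IsCompact (⋂ n, Metric.cthickening (κ n) (K n)) := by
  refine TotallyBounded.isCompact_of_isClosed (Metric.totallyBounded_iff.2 fun ε hε => ?_)
    (isClosed_iInter fun _ => Metric.isClosed_cthickening)
  obtain ⟨n, hn⟩ := (hκ.eventually (gt_mem_nhds (half_pos hε))).exists
  obtain ⟨F, hF, hcover⟩ := Metric.totallyBounded_iff.1 (hK n).totallyBounded _ (half_pos hε)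
  refine ⟨F, hF, fun x hx => ?_⟩
  obtain ⟨y, hy, hxy⟩ := Metric.mem_thickening_iff.1
    (Metric.cthickening_subset_thickening' (half_pos hε) hn (K n) (Set.mem_iInter.1 hx n))
  obtain ⟨z, hz, hyz⟩ := Set.mem_iUnion₂.1 (hcover hy)
  refine Set.mem_iUnion₂.2 ⟨z, hz, ?_⟩
  rw [Metric.mem_ball] at hyz ⊢
  linarith [dist_triangle x y z]

variable [CompleteSpace Ω] [SecondCountableTopology Ω] [MeasurableSpace Ω] [BorelSpace Ω]
  {S : Set (LevyProkhorov (ProbabilityMeasure Ω))}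

theorem exists_isCompact_forall_measure_compl_cthickening_le (hS : TotallyBounded S) {κ : ℝ}
    (hκ : 0 < κ) {ε : ℝ≥0∞} (hε : 0 < ε) :
    ∃ K : Set Ω, IsCompact K ∧
      ∀ P ∈ S, (P.toMeasure : Measure Ω) (Metric.cthickening κ K)ᶜ ≤ ε := by
  obtain ⟨η, -, hηε⟩ := ENNReal.lt_iff_exists_real_btwn.1 hε
  set r := min κ (η / 2)
  have hηpos : 0 < η := ENNReal.ofReal_pos.1 (by simpa using hηε.1)
  have hr : 0 < r := by positivity
  obtain ⟨F, -, hF, hcover⟩ := Metric.finite_approx_of_totallyBounded hS r hr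
  have htight (P : LevyProkhorov (ProbabilityMeasure Ω)) :
      ∃ K : Set Ω, IsCompact K ∧ (P.toMeasure : Measure Ω) Kᶜ ≤ ENNReal.ofReal r := by
    obtain ⟨K, hK, hPK⟩ := isTightMeasureSet_iff_exists_isCompact_measure_compl_le.1
      (isTightMeasureSet_singleton (μ := (P.toMeasure : Measure Ω))) _ (ENNReal.ofReal_pos.2 hr)
    exact ⟨K, hK, hPK _ rfl⟩
  choose K hK hPK using htight
  refine ⟨⋃ Q ∈ F, K Q, hF.isCompact_biUnion fun Q _ => hK Q, fun P hP => ?_⟩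
  obtain ⟨Q, hQ, hPQ⟩ := Set.mem_iUnion₂.1 (hcover hP)
  calc (P.toMeasure : Measure Ω) (Metric.cthickening κ (⋃ Q ∈ F, K Q))ᶜ
      ≤ (P.toMeasure : Measure Ω) (Metric.cthickening r (K Q))ᶜ := by
        refine measure_mono (Set.compl_subset_compl.2 ?_)
        exact (Metric.cthickening_mono (min_le_left _ _) _).trans
          (Metric.cthickening_subset_of_subset _ (Set.subset_biUnion_of_mem (u := K) hQ))
    _ ≤ (Q.toMeasure : Measure Ω) (K Q)ᶜ + ENNReal.ofReal r :=
        (levyProkhorov_measure_le_thickening_add hPQ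
          Metric.isClosed_cthickening.isOpen_compl.measurableSet).trans
          (by gcongr; exact thickening_compl_cthickening_subset _ _)
    _ ≤ ENNReal.ofReal r + ENNReal.ofReal r := by gcongr; exact hPK Q
    _ ≤ ε := by
        rw [← ENNReal.ofReal_add hr.le hr.le]
        exact (ENNReal.ofReal_le_ofReal (by linarith [min_le_right κ (η / 2)])).trans hηε.2.le

theorem isTightMeasureSet_of_totallyBounded (hS : TotallyBounded S) :
    IsTightMeasureSet ((fun P : LevyProkhorov (ProbabilityMeasure Ω) =>
      (P.toMeasure : Measure Ω)) '' S) := by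
  rw [isTightMeasureSet_iff_exists_isCompact_measure_compl_le]
  intro ε hε
  obtain ⟨η, hη, hsum⟩ := ENNReal.exists_pos_sum_of_countable hε.ne' ℕ
  choose K hK hSK using fun n : ℕ => exists_isCompact_forall_measure_compl_cthickening_le hS
    (κ := 1 / ((n : ℝ) + 1)) (by positivity) (ENNReal.coe_pos.2 (hη n))
  refine ⟨_, isCompact_iInter_cthickening hK tendsto_one_div_add_atTop_nhds_zero_nat, ?_⟩
  rintro _ ⟨P, hP, rfl⟩
  rw [Set.compl_iInter]
  exact (measure_iUnion_le _).trans ((ENNReal.tsum_le_tsum fun n => hSK n P hP).trans hsum.le)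

theorem completeSpace_levyProkhorov_probabilityMeasure :
    CompleteSpace (LevyProkhorov (ProbabilityMeasure Ω)) := by
  refine Metric.complete_of_cauchySeq_tendsto fun P hP => ?_
  have htight := isTightMeasureSet_of_totallyBounded hP.totallyBounded_range
  have hcompact : IsCompact (closure (Set.range fun n => (P n).toMeasure)) := by
    refine isCompact_closure_of_isTightMeasureSet (htight.subset ?_)
    rintro _ ⟨_, ⟨n, rfl⟩, rfl⟩
    exact ⟨P n, ⟨n, rfl⟩, rfl⟩
  obtain ⟨Q, -, ψ, hψ, hlim⟩ :=
    (hcompact.image (LevyProkhorov.probabilityMeasureHomeomorph (Ω := Ω)).continuous).tendsto_subseq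
      (x := P) fun n => ⟨(P n).toMeasure, subset_closure ⟨n, rfl⟩, rfl⟩
  exact ⟨Q, tendsto_nhds_of_cauchySeq_of_subseq hP hψ.tendsto_atTop hlim⟩

end LevyProkhorov

theorem indicator_le_indicator_thickening_add {X : Type*} [PseudoMetricSpace X] {κ : ℝ}
    (hκ : 0 < κ) (hκ₁ : κ ≤ 1) (B : Set X) (x y : X) :
    B.indicator (1 : X → ℝ≥0∞) x ≤
      ENNReal.ofReal (1 / κ) * ENNReal.ofReal (bdist x y) +
        (Metric.thickening κ B).indicator 1 y := by
  by_cases hx : x ∈ B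
  · by_cases hy : y ∈ Metric.thickening κ B
    · simp [hx, hy]
    · have hκxy : κ ≤ bdist x y := le_min hκ₁ <| not_lt.1 fun hlt =>
        hy (Metric.mem_thickening_iff.2 ⟨x, hx, by rwa [dist_comm]⟩)
      rw [Set.indicator_of_mem hx, Pi.one_apply, ← ENNReal.ofReal_mul (by positivity)]
      refine le_add_right (ENNReal.one_le_ofReal.2 ?_)
      rwa [one_div, ← div_eq_inv_mul, one_le_div hκ]
  · simp [hx]

theorem setLIntegral_Icc_le_add_of_mem_Icc {u : ℝ → ℝ≥0∞} (hu : u ≤ 1) {ξ ξ' a l : ℝ}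
    (hξ : ξ ∈ Set.Icc ξ' (ξ' + a)) :
    ∫⁻ t in Set.Icc ξ (ξ + l), u t ≤ (∫⁻ t in Set.Icc ξ' (ξ' + l), u t) + ENNReal.ofReal a := by
  have hsub : Set.Icc ξ (ξ + l) ⊆ Set.Icc ξ' (ξ' + l) ∪ Set.Icc (ξ' + l) (ξ' + l + a) := by
    intro t ht
    rcases le_total t (ξ' + l) with hle | hle
    · exact .inl ⟨hξ.1.trans ht.1, hle⟩
    · exact .inr ⟨hle, by linarith [ht.2, hξ.2]⟩
  calc ∫⁻ t in Set.Icc ξ (ξ + l), u t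
      ≤ (∫⁻ t in Set.Icc ξ' (ξ' + l), u t) + ∫⁻ t in Set.Icc (ξ' + l) (ξ' + l + a), u t :=
        (lintegral_mono_set hsub).trans (lintegral_union_le _ _ _)
    _ ≤ _ := by
        gcongr
        refine (lintegral_mono hu).trans ?_
        simp

theorem setLIntegral_indicator_le_thickening_add {X : Type*} [PseudoMetricSpace X] {h : ℝ → X}
    (hh : StronglyMeasurable h) {κ l ξ : ℝ} (hκ : 0 < κ) (hκ₁ : κ ≤ 1) {a τ ξ' : ℝ}
    (hτ : ξ + τ ∈ Set.Icc ξ' (ξ' + a)) (hl : 0 < l) (hal : a ≤ κ * l)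
    (hshift : shiftDistL h l τ ≤ ENNReal.ofReal (κ ^ 2)) (B : Set X) :
    ∫⁻ t in Set.Icc ξ (ξ + l), B.indicator 1 (h t) ≤
      (∫⁻ t in Set.Icc ξ' (ξ' + l), (Metric.thickening κ B).indicator 1 (h t)) +
        ENNReal.ofReal (l * (2 * κ)) := by
  have hbdist : ∫⁻ t in Set.Icc ξ (ξ + l), ENNReal.ofReal (bdist (h t) (h (t + τ))) ≤
      ENNReal.ofReal l * ENNReal.ofReal (κ ^ 2) := by
    refine (setLIntegral_Icc_le_mul_supAvg hl _ ξ).trans ?_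
    rw [← shiftDistL_eq_supAvg]
    gcongr
  calc ∫⁻ t in Set.Icc ξ (ξ + l), B.indicator 1 (h t)
      ≤ ∫⁻ t in Set.Icc ξ (ξ + l), (ENNReal.ofReal (1 / κ) *
          ENNReal.ofReal (bdist (h t) (h (t + τ))) +
            (Metric.thickening κ B).indicator 1 (h (t + τ))) :=
        lintegral_mono fun t => indicator_le_indicator_thickening_add hκ hκ₁ B _ _
    _ = ENNReal.ofReal (1 / κ) * (∫⁻ t in Set.Icc ξ (ξ + l),
          ENNReal.ofReal (bdist (h t) (h (t + τ)))) +
        ∫⁻ t in Set.Icc (ξ + τ) (ξ + τ + l), (Metric.thickening κ B).indicator 1 (h t) := by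
        rw [lintegral_add_left ((measurable_ofReal_bdist hh τ).const_mul _),
          lintegral_const_mul' _ _ ENNReal.ofReal_ne_top, add_right_comm ξ τ l,
          setLIntegral_Icc_comp_add_right fun t => (Metric.thickening κ B).indicator 1 (h t)]
    _ ≤ ENNReal.ofReal (1 / κ) * (ENNReal.ofReal l * ENNReal.ofReal (κ ^ 2)) +
        ((∫⁻ t in Set.Icc ξ' (ξ' + l), (Metric.thickening κ B).indicator 1 (h t)) +
          ENNReal.ofReal (κ * l)) := by
        gcongr
        refine (setLIntegral_Icc_le_add_of_mem_Icc (fun t => ?_) hτ).trans (by gcongr)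
        exact Set.indicator_le_self _ _ _
    _ = _ := by
        rw [← ENNReal.ofReal_mul hl.le, ← ENNReal.ofReal_mul (by positivity), add_left_comm,
          ← ENNReal.ofReal_add (by positivity) (by positivity)]
        congr 2
        field_simp
        ring

section timeLaw

variable {X : Type*} [PseudoMetricSpace X] [MeasurableSpace X] [BorelSpace X] {h : ℝ → X}
  {B : Set X} {κ l ξ : ℝ}

/-- The law of `h` at a time uniformly distributed in `[ξ, ξ + l]`. -/
noncomputable def timeLaw (h : ℝ → X) (ξ l : ℝ) : Measure X :=
  (ProbabilityTheory.cond volume (Set.Icc ξ (ξ + l))).map h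

theorem isProbabilityMeasure_timeLaw (hh : StronglyMeasurable h) (hl : 0 < l) (ξ : ℝ) :
    IsProbabilityMeasure (timeLaw h ξ l) :=
  have := ProbabilityTheory.cond_isProbabilityMeasure_of_finite
    (μ := volume) (s := Set.Icc ξ (ξ + l)) (by simp [hl]) (by simp)
  Measure.isProbabilityMeasure_map hh.measurable.aemeasurable

theorem timeLaw_apply (hh : StronglyMeasurable h) (hl : 0 < l) (ξ : ℝ) (hB : MeasurableSet B) :
    timeLaw h ξ l B = ENNReal.ofReal (1 / l) *
      ∫⁻ t in Set.Icc ξ (ξ + l), B.indicator 1 (h t) := by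
  have hint : ∫⁻ t in Set.Icc ξ (ξ + l), B.indicator (1 : X → ℝ≥0∞) (h t) =
      volume.restrict (Set.Icc ξ (ξ + l)) (h ⁻¹' B) :=
    lintegral_indicator_one (hh.measurable hB)
  rw [hint, timeLaw, Measure.map_apply hh.measurable hB, ProbabilityTheory.cond, Measure.smul_apply,
    smul_eq_mul, Real.volume_Icc, add_sub_cancel_left, one_div, ENNReal.ofReal_inv_of_pos hl]

theorem setLIntegral_eq_mul_timeLaw (hh : StronglyMeasurable h) (hl : 0 < l) (ξ : ℝ)
    (hB : MeasurableSet B) :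
    ∫⁻ t in Set.Icc ξ (ξ + l), B.indicator 1 (h t) = ENNReal.ofReal l * timeLaw h ξ l B := by
  rw [timeLaw_apply hh hl ξ hB, ← mul_assoc, ← ENNReal.ofReal_mul hl.le,
    mul_one_div_cancel hl.ne', ENNReal.ofReal_one, one_mul]

theorem supAvg_indicator_comp (hh : StronglyMeasurable h) (hl : 0 < l) (hB : MeasurableSet B) :
    supAvg l (fun t => B.indicator 1 (h t)) = ⨆ ξ, timeLaw h ξ l B :=
  iSup_congr fun ξ => (timeLaw_apply hh hl ξ hB).symm

theorem WeylAP.exists_forall_timeLaw_le (hh : StronglyMeasurable h) (hw : WeylAP h) (hκ : 0 < κ)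
    (hκ₁ : κ ≤ 1) :
    ∃ l > 0, ∀ L ≥ l, ∀ ξ ξ' : ℝ, ∀ B, MeasurableSet B →
      timeLaw h ξ L B ≤ timeLaw h ξ' L (Metric.thickening κ B) + ENNReal.ofReal (2 * κ) := by
  obtain ⟨l, hl, T, ⟨a, -, hT⟩, hper⟩ := hw.exists_forall_shiftDistL_lt (pow_pos hκ 2)
  refine ⟨max l (a / κ), lt_max_of_lt_left hl, fun L hL ξ ξ' B hB => ?_⟩
  obtain ⟨hlL, haL⟩ := max_le_iff.1 hL
  obtain ⟨τ, hτ, hτT⟩ := hT (ξ' - ξ)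
  have hL₀ : 0 < L := hl.trans_le hlL
  have hint := setLIntegral_indicator_le_thickening_add hh hκ hκ₁ (ξ := ξ) (τ := τ) (ξ' := ξ')
    (a := a) (by constructor <;> linarith [hτ.1, hτ.2]) hL₀ ((div_le_iff₀' hκ).1 haL)
    (hper L hlL τ hτT).le B
  rw [setLIntegral_eq_mul_timeLaw hh hL₀ ξ hB,
    setLIntegral_eq_mul_timeLaw hh hL₀ ξ' Metric.isOpen_thickening.measurableSet,
    ENNReal.ofReal_mul hL₀.le, ← mul_add] at hint
  exact (ENNReal.mul_le_mul_iff_right (by simpa) ENNReal.ofReal_ne_top).1 hint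

theorem timeLaw_natCast_mul_le (hh : StronglyMeasurable h) (hl : 0 < l) {n : ℕ} (hn : 0 < n)
    {c : ℝ≥0∞} (hB : MeasurableSet B) (hc : ∀ ξ', timeLaw h ξ' l B ≤ c) :
    timeLaw h ξ (n * l) B ≤ c := by
  have hnl : 0 < n * l := by positivity
  have hsum : ENNReal.ofReal (n * l) * timeLaw h ξ (n * l) B ≤ ENNReal.ofReal (n * l) * c := by
    rw [← setLIntegral_eq_mul_timeLaw hh hnl ξ hB, setLIntegral_Icc_add_mul_eq_sum hl.le]
    refine (Finset.sum_le_card_nsmul _ _ (ENNReal.ofReal l * c) fun i _ => ?_).trans_eq ?_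
    · rw [setLIntegral_eq_mul_timeLaw hh hl _ hB]
      gcongr
      exact hc _
    · rw [Finset.card_range, nsmul_eq_mul, ENNReal.ofReal_mul n.cast_nonneg,
        ENNReal.ofReal_natCast, mul_assoc]
  exact (ENNReal.mul_le_mul_iff_right (by simp [hn.ne', hl]) ENNReal.ofReal_ne_top).1 hsum

end timeLaw

section meanLaw

variable {X : Type*} [PseudoMetricSpace X] [MeasurableSpace X] [BorelSpace X] {h : ℝ → X}

/-- The laws of `h` on the intervals `[0, 2 ^ n]`, which converge to its mean law. -/
noncomputable def dyadicTimeLaw (hh : StronglyMeasurable h) (n : ℕ) :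
    LevyProkhorov (ProbabilityMeasure X) :=
  .ofMeasure ⟨timeLaw h 0 (2 ^ n), isProbabilityMeasure_timeLaw hh (by positivity) 0⟩

theorem WeylAP.cauchySeq_dyadicTimeLaw (hh : StronglyMeasurable h) (hw : WeylAP h) :
    CauchySeq (dyadicTimeLaw hh) := by
  refine Metric.cauchySeq_iff'.2 fun ε hε => ?_
  set κ := min (ε / 4) 1
  have hκ : 0 < κ := by positivity
  have hκε : κ ≤ ε / 4 := min_le_left _ _
  obtain ⟨l, -, hlaw⟩ := hw.exists_forall_timeLaw_le hh hκ (min_le_right _ _)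
  obtain ⟨N, hN⟩ := pow_unbounded_of_one_lt l one_lt_two
  refine ⟨N, fun n hn => ?_⟩
  obtain ⟨k, rfl⟩ := Nat.exists_eq_add_of_le hn
  rw [LevyProkhorov.dist_probabilityMeasure_def]
  refine (levyProkhorovDist_le_of_forall_le _ _ (δ := 2 * κ) (by positivity)
    fun r B hr hB => ?_).trans_lt (by linarith)
  change timeLaw h 0 (2 ^ (N + k)) B ≤
    timeLaw h 0 (2 ^ N) (Metric.thickening r B) + ENNReal.ofReal r
  have hpow : (2 : ℝ) ^ (N + k) = (2 ^ k : ℕ) * 2 ^ N := by push_cast; ring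
  rw [hpow]
  refine timeLaw_natCast_mul_le hh (by positivity) (by positivity) hB fun ξ => ?_
  refine (hlaw _ hN.le ξ 0 B hB).trans (add_le_add (measure_mono ?_) ?_)
  · exact Metric.thickening_mono (by linarith) _
  · exact ENNReal.ofReal_le_ofReal hr.le

/-- `ν` bounds the frequency with which `h` visits any set, up to an arbitrarily small thickening,
uniformly over the sets. -/
def BoundsFrequencies (ν : Measure X) (h : ℝ → X) : Prop :=
  ∀ κ > 0, ∃ l > 0, ∀ L ≥ l, ∀ B, MeasurableSet B →
    supAvg L (fun t => B.indicator 1 (h t)) ≤ 2 * ν (Metric.thickening κ B) + ENNReal.ofReal κ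

theorem WeylAP.exists_boundsFrequencies {X : Type*} [MetricSpace X] [CompleteSpace X]
    [SecondCountableTopology X] [MeasurableSpace X] [BorelSpace X] {h : ℝ → X}
    (hh : StronglyMeasurable h) (hw : WeylAP h) :
    ∃ ν : ProbabilityMeasure X, BoundsFrequencies (ν : Measure X) h := by
  have := completeSpace_levyProkhorov_probabilityMeasure (Ω := X)
  obtain ⟨ν, hν⟩ := cauchySeq_tendsto_of_complete (hw.cauchySeq_dyadicTimeLaw hh)
  refine ⟨ν.toMeasure, fun κ hκ => ?_⟩
  set r := min (κ / 6) 1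
  have hr : 0 < r := by positivity
  have hrκ : r ≤ κ / 6 := min_le_left _ _
  obtain ⟨l, -, hlaw⟩ := hw.exists_forall_timeLaw_le hh hr (min_le_right _ _)
  obtain ⟨n, hn, hnl⟩ := ((hν.eventually (Metric.ball_mem_nhds ν hr)).and
    ((tendsto_pow_atTop_atTop_of_one_lt one_lt_two).eventually_ge_atTop l)).exists
  have hn₀ : (0 : ℝ) < 2 ^ n := by positivity
  refine ⟨2 ^ n, hn₀, fun L hL B hB => ?_⟩
  have hscale (ξ : ℝ) : timeLaw h ξ (2 ^ n) B ≤
      (ν.toMeasure : Measure X) (Metric.thickening κ B) + ENNReal.ofReal (κ / 2) := by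
    calc timeLaw h ξ (2 ^ n) B
        ≤ timeLaw h 0 (2 ^ n) (Metric.thickening r B) + ENNReal.ofReal (2 * r) :=
          hlaw _ hnl ξ 0 B hB
      _ ≤ (ν.toMeasure : Measure X) (Metric.thickening r (Metric.thickening r B)) +
            ENNReal.ofReal r + ENNReal.ofReal (2 * r) := by
          gcongr
          exact levyProkhorov_measure_le_thickening_add hn Metric.isOpen_thickening.measurableSet
      _ ≤ _ := by
          rw [add_assoc, ← ENNReal.ofReal_add hr.le (by positivity)]
          gcongr
          · exact (Metric.thickening_thickening_subset _ _ _).trans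
              (Metric.thickening_mono (by linarith) _)
          · linarith
  calc supAvg L (fun t => B.indicator 1 (h t))
      ≤ 2 * supAvg (2 ^ n) (fun t => B.indicator 1 (h t)) := supAvg_le_two_mul_supAvg hn₀ hL _
    _ ≤ 2 * ((ν.toMeasure : Measure X) (Metric.thickening κ B) + ENNReal.ofReal (κ / 2)) := by
        rw [supAvg_indicator_comp hh hn₀ hB]
        gcongr
        exact iSup_le hscale
    _ = _ := by
        rw [mul_add, ← ENNReal.ofReal_ofNat, ← ENNReal.ofReal_mul zero_le_two,
          mul_div_cancel₀ _ two_ne_zero]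

end meanLaw

section oscillation

variable {X Y : Type*} [PseudoMetricSpace X] [PseudoMetricSpace Y] {φ : X → Y} {h : ℝ → X}
  {ε κ s : ℝ}

/-- The points near which, on the scale `κ`, `φ` oscillates by more than `ε`. -/
def oscSet (φ : X → Y) (ε κ : ℝ) : Set X :=
  {x | ∃ y y', dist y x < κ ∧ dist y' x < κ ∧ ε < dist (φ y) (φ y')}

theorem isOpen_oscSet (φ : X → Y) (ε κ : ℝ) : IsOpen (oscSet φ ε κ) := by
  refine isOpen_iff_mem_nhds.2 fun x ⟨y, y', hy, hy', hlt⟩ => ?_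
  rw [dist_comm] at hy hy'
  filter_upwards [Metric.isOpen_ball.mem_nhds hy, Metric.isOpen_ball.mem_nhds hy'] with z hz hz'
  exact ⟨y, y', by rwa [dist_comm], by rwa [dist_comm], hlt⟩

theorem oscSet_mono (φ : X → Y) (ε : ℝ) : Monotone (oscSet φ ε) :=
  fun _ _ hle _ ⟨y, y', hy, hy', hlt⟩ => ⟨y, y', hy.trans_le hle, hy'.trans_le hle, hlt⟩

theorem thickening_oscSet_subset (φ : X → Y) (ε κ : ℝ) :
    Metric.thickening κ (oscSet φ ε κ) ⊆ oscSet φ ε (κ + κ) := by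
  intro z hz
  obtain ⟨x, ⟨y, y', hy, hy', hlt⟩, hzx⟩ := Metric.mem_thickening_iff.1 hz
  rw [dist_comm] at hzx
  exact ⟨y, y', (dist_triangle y x z).trans_lt (add_lt_add hy hzx),
    (dist_triangle y' x z).trans_lt (add_lt_add hy' hzx), hlt⟩

theorem exists_notMem_oscSet_of_continuousAt {x : X} (hφ : ContinuousAt φ x) (hε : 0 < ε) :
    ∃ κ > 0, x ∉ oscSet φ ε κ := by
  obtain ⟨κ, hκ, hlt⟩ := Metric.continuousAt_iff.1 hφ (ε / 2) (half_pos hε)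
  refine ⟨κ, hκ, fun ⟨y, y', hy, hy', hεlt⟩ => ?_⟩
  linarith [dist_triangle_right (φ y) (φ y') (φ x), hlt hy, hlt hy']

theorem ofReal_bdist_comp_le (φ : X → Y) (ε : ℝ) (hκ : 0 < κ) (hκ₁ : κ ≤ 1) (x x' : X) :
    ENNReal.ofReal (bdist (φ x) (φ x')) ≤ ENNReal.ofReal (1 / κ) * ENNReal.ofReal (bdist x x') +
      (ENNReal.ofReal ε + (oscSet φ ε κ).indicator 1 x) := by
  rcases le_or_gt κ (bdist x x') with hfar | hnear
  · refine le_add_right ((ENNReal.ofReal_le_one.2 (bdist_le_one _ _)).trans ?_)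
    rw [← ENNReal.ofReal_mul (by positivity)]
    refine ENNReal.one_le_ofReal.2 ?_
    rwa [one_div, ← div_eq_inv_mul, one_le_div hκ]
  · refine le_add_left ?_
    by_cases hx : x ∈ oscSet φ ε κ
    · rw [Set.indicator_of_mem hx]
      exact le_add_left (ENNReal.ofReal_le_one.2 (bdist_le_one _ _))
    · have hdist : dist x x' < κ := (min_lt_iff.1 hnear).resolve_left hκ₁.not_gt
      refine le_add_right (ENNReal.ofReal_le_ofReal ((bdist_le_dist _ _).trans (not_lt.1 ?_)))
      exact fun hlt => hx ⟨x, x', by rwa [dist_self], by rwa [dist_comm], hlt⟩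

theorem shiftDistL_comp_le (hh : StronglyMeasurable h) (φ : X → Y) (ε : ℝ) (hκ : 0 < κ)
    (hκ₁ : κ ≤ 1) {L : ℝ} (hL : 0 < L) (s : ℝ) :
    shiftDistL (φ ∘ h) L s ≤ ENNReal.ofReal ε +
      supAvg L (fun t => (oscSet φ ε κ).indicator 1 (h t)) +
        ENNReal.ofReal (1 / κ) * shiftDistL h L s := by
  rw [shiftDistL_eq_supAvg, shiftDistL_eq_supAvg, add_comm,
    ← supAvg_const_mul L ENNReal.ofReal_ne_top]
  refine (supAvg_mono L fun t => ofReal_bdist_comp_le φ ε hκ hκ₁ _ _).trans ?_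
  refine (supAvg_add_le L ((measurable_ofReal_bdist hh s).const_mul _) _).trans ?_
  gcongr
  refine (supAvg_add_le L measurable_const _).trans ?_
  gcongr
  exact supAvg_le_of_le hL fun _ => le_rfl

variable [MeasurableSpace X] [BorelSpace X] {ν : Measure X} [IsFiniteMeasure ν]

theorem tendsto_measure_oscSet (hφ : ∀ᵐ x ∂ν, ContinuousAt φ x) (hε : 0 < ε) :
    Tendsto (fun κ => ν (oscSet φ ε κ)) (𝓝[>] 0) (𝓝 0) := by
  have hlim := tendsto_measure_biInter_gt (μ := ν) (s := oscSet φ ε) (a := 0)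
    (fun κ _ => (isOpen_oscSet φ ε κ).measurableSet.nullMeasurableSet)
    (fun _ _ _ hle => oscSet_mono φ ε hle) ⟨1, one_pos, measure_ne_top _ _⟩
  have hnull : ν (⋂ κ > 0, oscSet φ ε κ) = 0 := by
    refine measure_mono_null (t := {x | ¬ ContinuousAt φ x}) (fun x hx hcont => ?_) (ae_iff.1 hφ)
    obtain ⟨κ, hκ, hnot⟩ := exists_notMem_oscSet_of_continuousAt hcont hε
    exact hnot (Set.mem_iInter₂.1 hx κ hκ)
  rwa [hnull] at hlim

theorem BoundsFrequencies.exists_supAvg_oscSet_le (hν : BoundsFrequencies ν h)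
    (hφ : ∀ᵐ x ∂ν, ContinuousAt φ x) (hε : 0 < ε) {η : ℝ} (hη : 0 < η) :
    ∃ κ > 0, κ ≤ 1 ∧ ∃ l > 0, ∀ L ≥ l,
      supAvg L (fun t => (oscSet φ ε κ).indicator 1 (h t)) ≤ ENNReal.ofReal η := by
  have hlim : Tendsto (fun κ : ℝ => 2 * ν (oscSet φ ε (κ + κ)) + ENNReal.ofReal κ) (𝓝[>] 0)
      (𝓝 0) := by
    have hdouble : Tendsto (fun κ : ℝ => κ + κ) (𝓝[>] 0) (𝓝[>] 0) :=
      tendsto_nhdsWithin_iff.2 ⟨((continuous_id.add continuous_id).tendsto' 0 0 (by simp)).mono_left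
        nhdsWithin_le_nhds, eventually_mem_nhdsWithin.mono fun κ hκ => add_pos (a := κ) hκ hκ⟩
    have hosc := ENNReal.Tendsto.const_mul ((tendsto_measure_oscSet hφ hε).comp hdouble)
      (.inr (ENNReal.ofNat_ne_top (n := 2)))
    have hκ := (ENNReal.continuous_ofReal.tendsto' 0 0 ENNReal.ofReal_zero).mono_left
      (nhdsWithin_le_nhds (s := Set.Ioi 0))
    simpa using hosc.add hκ
  obtain ⟨κ, hle, hκ₀, hκ₁⟩ := ((hlim.eventually_le_const (ENNReal.ofReal_pos.2 hη)).and
    (Ioc_mem_nhdsGT one_pos)).exists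
  obtain ⟨l, hl, hbound⟩ := hν κ hκ₀
  refine ⟨κ, hκ₀, hκ₁, l, hl, fun L hL => ?_⟩
  refine (hbound L hL _ (isOpen_oscSet φ ε κ).measurableSet).trans (le_trans ?_ hle)
  gcongr
  exact thickening_oscSet_subset φ ε κ

theorem BoundsFrequencies.exists_shiftDistL_comp_le (hh : StronglyMeasurable h)
    (hν : BoundsFrequencies ν h) (hφ : ∀ᵐ x ∂ν, ContinuousAt φ x) (hε : 0 < ε) :
    ∃ C : ℝ≥0∞, C ≠ ∞ ∧ ∃ l > 0, ∀ L ≥ l, ∀ s,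
      shiftDistL (φ ∘ h) L s ≤ ENNReal.ofReal ε + C * shiftDistL h L s := by
  obtain ⟨κ, hκ₀, hκ₁, l, hl, hosc⟩ :=
    hν.exists_supAvg_oscSet_le hφ (half_pos hε) (half_pos hε)
  refine ⟨ENNReal.ofReal (1 / κ), ENNReal.ofReal_ne_top, l, hl, fun L hL s => ?_⟩
  refine (shiftDistL_comp_le hh φ (ε / 2) hκ₀ hκ₁ (hl.trans_le hL) s).trans ?_
  gcongr
  refine (add_le_add_right (hosc L hL) _).trans_eq ?_
  rw [← ENNReal.ofReal_add (half_pos hε).le (half_pos hε).le, add_halves]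

theorem BoundsFrequencies.weylAP_comp (hh : StronglyMeasurable h) (hν : BoundsFrequencies ν h)
    (hw : WeylAP h) (hφ : ∀ᵐ x ∂ν, ContinuousAt φ x) : WeylAP (φ ∘ h) := by
  intro ε hε
  obtain ⟨C, hC, l, hl, hcomp⟩ := hν.exists_shiftDistL_comp_le hh hφ (half_pos hε)
  have hη : 0 < ε / 2 / (C.toReal + 1) := by positivity
  obtain ⟨l', -, T, hT, hper⟩ := hw.exists_forall_shiftDistL_lt hη
  refine ⟨max l l', lt_max_of_lt_left hl, hT.mono fun s hs => ?_⟩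
  calc shiftDistL (φ ∘ h) (max l l') s
      ≤ ENNReal.ofReal (ε / 2) + C * shiftDistL h (max l l') s := hcomp _ (le_max_left _ _) s
    _ ≤ ENNReal.ofReal (ε / 2) + C * ENNReal.ofReal (ε / 2 / (C.toReal + 1)) := by
        gcongr
        exact (hper _ (le_max_right _ _) s hs).le
    _ < ENNReal.ofReal ε := by
        rw [← ENNReal.ofReal_toReal hC, ENNReal.toReal_ofReal C.toReal_nonneg,
          ← ENNReal.ofReal_mul C.toReal_nonneg,
          ← ENNReal.ofReal_add (by positivity) (by positivity), ENNReal.ofReal_lt_ofReal_iff hε,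
          ← mul_div_assoc, add_comm, ← lt_sub_iff_add_lt, sub_half, div_lt_iff₀ (by positivity)]
        nlinarith

theorem BoundsFrequencies.tendsto_shiftDist_comp (hh : StronglyMeasurable h)
    (hν : BoundsFrequencies ν h) (hφ : ∀ᵐ x ∂ν, ContinuousAt φ x) {ι : Type*} {f : Filter ι}
    {τ : ι → ℝ} (hτ : Tendsto (fun j => shiftDist h (τ j)) f (𝓝 0)) :
    Tendsto (fun j => shiftDist (φ ∘ h) (τ j)) f (𝓝 0) := by
  refine ENNReal.tendsto_nhds_zero.2 fun η hη => ?_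
  obtain ⟨ε, -, hε, hεη⟩ := ENNReal.lt_iff_exists_real_btwn.1 hη
  rw [ENNReal.ofReal_pos] at hε
  obtain ⟨C, hC, l, -, hcomp⟩ := hν.exists_shiftDistL_comp_le hh hφ hε
  have hlim : Tendsto (fun j => ENNReal.ofReal ε + C * shiftDist h (τ j)) f
      (𝓝 (ENNReal.ofReal ε)) := by
    simpa using tendsto_const_nhds.add (ENNReal.Tendsto.const_mul hτ (.inr hC))
  filter_upwards [hlim.eventually_lt_const hεη] with j hj
  exact (shiftDist_le_add_mul hC l fun L hL => hcomp L hL _).trans hj.le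

end oscillation

section selection

theorem eventually_mem_iff_of_notMem_frontier {X : Type*} [TopologicalSpace X] {B : Set X} {x : X}
    (hx : x ∉ frontier B) : ∀ᶠ x' in 𝓝 x, x' ∈ B ↔ x ∈ B := by
  by_cases hxB : x ∈ B
  · have hmem : B ∈ 𝓝 x := mem_interior_iff_mem_nhds.1 <|
      by_contra fun h => hx ⟨subset_closure hxB, h⟩
    filter_upwards [hmem] with x' hx' using iff_of_true hx' hxB
  · have hmem : (closure B)ᶜ ∈ 𝓝 x := isClosed_closure.isOpen_compl.mem_nhds fun h =>
      hx ⟨h, fun hint => hxB (interior_subset hint)⟩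
    filter_upwards [hmem] with x' hx' using iff_of_false (fun h => hx' (subset_closure h)) hxB

theorem exists_measurable_index {X : Type*} [TopologicalSpace X] [MeasurableSpace X]
    [OpensMeasurableSpace X] {ν : Measure X} {B : ℕ → Set X} (hB : ∀ n, IsOpen (B n))
    (hν : ∀ n, ν (frontier (B n)) = 0) :
    ∃ N : X → ℕ, Measurable N ∧ (∀ x ∈ ⋃ n, B n, x ∈ B (N x)) ∧
      ∀ᵐ x ∂ν, x ∈ ⋃ n, B n → ∀ᶠ x' in 𝓝 x, N x' = N x := by
  classical
  have hex : ∀ x, ∃ n, x ∈ B n ∨ x ∉ ⋃ n, B n := fun x => by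
    by_cases hx : x ∈ ⋃ n, B n
    · exact (Set.mem_iUnion.1 hx).imp fun _ => .inl
    · exact ⟨0, .inr hx⟩
  have hmem : ∀ x ∈ ⋃ n, B n, x ∈ B (Nat.find (hex x)) := fun x hx =>
    (Nat.find_spec (hex x)).resolve_right (not_not.2 hx)
  have hmeas : ∀ n, MeasurableSet {x | x ∈ B n ∨ x ∉ ⋃ n, B n} := fun n =>
    (hB n).measurableSet.union (isOpen_iUnion hB).measurableSet.compl
  refine ⟨fun x => Nat.find (hex x), measurable_find hex hmeas, hmem, ?_⟩
  have hfrontier : ∀ᵐ x ∂ν, ∀ n, x ∉ frontier (B n) :=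
    ae_all_iff.2 fun n => measure_eq_zero_iff_ae_notMem.1 (hν n)
  filter_upwards [hfrontier] with x hx hxB
  have hagree : ∀ᶠ x' in 𝓝 x, ∀ n ∈ Set.Iic (Nat.find (hex x)), x' ∈ B n ↔ x ∈ B n :=
    (eventually_all_finite (Set.finite_Iic _)).2 fun n _ =>
      eventually_mem_iff_of_notMem_frontier (hx n)
  filter_upwards [hagree] with x' hx'
  have hx'B : x' ∈ B (Nat.find (hex x)) := (hx' _ Set.self_mem_Iic).2 (hmem x hxB)
  refine (Nat.find_eq_iff (hex x')).2 ⟨.inl hx'B, fun n hn hn' => Nat.find_min (hex x) hn (.inl ?_)⟩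
  exact (hx' n (Set.mem_Iic.2 hn.le)).1 <| hn'.resolve_right <|
    not_not.2 (Set.mem_iUnion_of_mem _ hx'B)

/-- A measurable function with countably many values which is locally constant near `ν`-almost every
point; the building block of `ν`-almost everywhere continuous selections. -/
structure IsAEStep {X Y : Type*} [TopologicalSpace X] [MeasurableSpace X] [MeasurableSpace Y]
    (ν : Measure X) (f : X → Y) : Prop where
  measurable : Measurable f
  countable_range : (Set.range f).Countable
  ae_eventually_eq : ∀ᵐ x ∂ν, ∀ᶠ x' in 𝓝 x, f x' = f x

theorem IsAEStep.const {X Y : Type*} [TopologicalSpace X] [MeasurableSpace X] [MeasurableSpace Y]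
    (ν : Measure X) (y : Y) : IsAEStep ν fun _ => y :=
  ⟨measurable_const, (Set.countable_singleton y).mono Set.range_const_subset, by simp⟩

theorem IsAEStep.glue {X Y Z : Type*} [TopologicalSpace X] [MeasurableSpace X] [MeasurableSpace Y]
    [MeasurableSpace Z] [MeasurableSingletonClass Z] {ν : Measure X} {F : X → Z}
    (hF : IsAEStep ν F) {f : Z → X → Y} (hf : ∀ z, Measurable (f z))
    (hfr : ∀ z, (Set.range (f z)).Countable)
    (hloc : ∀ z, ∀ᵐ x ∂ν, F x = z → ∀ᶠ x' in 𝓝 x, f z x' = f z x) :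
    IsAEStep ν fun x => f (F x) x where
  measurable := by
    intro B hB
    have hpre : (fun x => f (F x) x) ⁻¹' B = ⋃ z ∈ Set.range F, F ⁻¹' {z} ∩ f z ⁻¹' B := by
      ext x
      refine ⟨fun hx => Set.mem_biUnion (Set.mem_range_self x) ⟨rfl, hx⟩, fun hx => ?_⟩
      obtain ⟨z, -, rfl, hz⟩ := Set.mem_iUnion₂.1 hx
      exact hz
    rw [hpre]
    exact .biUnion hF.countable_range fun z _ =>
      (hF.measurable (measurableSet_singleton z)).inter (hf z hB)
  countable_range := by
    refine (hF.countable_range.biUnion fun z _ => hfr z).mono ?_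
    rintro _ ⟨x, rfl⟩
    exact Set.mem_biUnion (Set.mem_range_self x) (Set.mem_range_self x)
  ae_eventually_eq := by
    filter_upwards [hF.ae_eventually_eq,
      (ae_ball_iff hF.countable_range).2 fun z _ => hloc z] with x hFx hfx
    filter_upwards [hFx, hfx (F x) (Set.mem_range_self x) rfl] with x' hx' hfx'
    rw [hx', hfx']

theorem exists_ball_subset_null_frontier {X : Type*} [PseudoMetricSpace X] [MeasurableSpace X]
    [OpensMeasurableSpace X] (ν : Measure X) [SFinite ν] {x : X} {s : Set X} (hs : s ∈ 𝓝 x) :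
    ∃ r > 0, Metric.ball x r ⊆ s ∧ ν (frontier (Metric.ball x r)) = 0 := by
  obtain ⟨R, hR, hsub⟩ := Metric.mem_nhds_iff.1 hs
  obtain ⟨r, hr, hnull⟩ := exists_null_frontier_thickening ν {x} hR
  rw [Metric.thickening_singleton] at hnull
  exact ⟨r, hr.1, (Metric.ball_subset_ball hr.2.le).trans hsub, hnull⟩

variable {X Y Z : Type*} [PseudoMetricSpace X] [SecondCountableTopology X] [MeasurableSpace X]
  [OpensMeasurableSpace X] [MeasurableSpace Y]

theorem exists_countable_range_selection [Nonempty Y] (ν : Measure X) [SFinite ν]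
    {A : Set X} {Q : X → Y → Prop} (hQ : ∀ x ∈ A, ∃ y, ∀ᶠ x' in 𝓝 x, Q x' y) :
    ∃ f : X → Y, Measurable f ∧ (Set.range f).Countable ∧ (∀ x ∈ A, Q x (f x)) ∧
      ∀ᵐ x ∂ν, x ∈ A → ∀ᶠ x' in 𝓝 x, f x' = f x := by
  rcases A.eq_empty_or_nonempty with rfl | hA
  · have hstep := IsAEStep.const ν (Classical.arbitrary Y)
    exact ⟨_, hstep.measurable, hstep.countable_range, by simp, by simp⟩
  choose! y hy using hQ
  choose! r hr hrQ hrν using fun x (hx : x ∈ A) => exists_ball_subset_null_frontier ν (hy x hx)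
  obtain ⟨t, htA, ht, hcover⟩ := countable_cover_nhdsWithin (f := fun x => Metric.ball x (r x))
    fun x hx => mem_nhdsWithin_of_mem_nhds (Metric.ball_mem_nhds x (hr x hx))
  have htne : t.Nonempty := by
    obtain ⟨x, hx⟩ := hA
    obtain ⟨z, hz, -⟩ := Set.mem_iUnion₂.1 (hcover hx)
    exact ⟨z, hz⟩
  obtain ⟨z, rfl⟩ := ht.exists_eq_range htne
  rw [Set.biUnion_range] at hcover
  have hzA : ∀ n, z n ∈ A := fun n => htA (Set.mem_range_self n)
  obtain ⟨N, hN, hNmem, hNloc⟩ := exists_measurable_index (ν := ν)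
    (B := fun n => Metric.ball (z n) (r (z n))) (fun n => Metric.isOpen_ball)
    fun n => hrν _ (hzA n)
  refine ⟨fun x => y (z (N x)), (measurable_from_nat (f := fun n => y (z n))).comp hN,
    (Set.countable_range fun n => y (z n)).mono (Set.range_comp_subset_range N fun n => y (z n)),
    fun x hx => hrQ _ (hzA _) (hNmem x (hcover hx)), ?_⟩
  filter_upwards [hNloc] with x hloc hx
  filter_upwards [hloc (hcover hx)] with x' hx'
  rw [hx']

theorem IsAEStep.exists_refinement [MeasurableSpace Z] [MeasurableSingletonClass Z] [Nonempty Y]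
    {ν : Measure X} [SFinite ν] {F : X → Z} (hF : IsAEStep ν F) {Q : Z → X → Y → Prop}
    (hQ : ∀ x, ∃ y, ∀ᶠ x' in 𝓝 x, Q (F x) x' y) :
    ∃ f : X → Y, IsAEStep ν f ∧ ∀ x, Q (F x) x (f x) := by
  choose f hf hfr hfQ hloc using fun z => exists_countable_range_selection ν (A := F ⁻¹' {z})
    (Q := Q z) fun x hx => hx ▸ hQ x
  exact ⟨_, hF.glue hf hfr hloc, fun x => hfQ (F x) x rfl⟩

theorem exists_seq_isAEStep [PseudoMetricSpace Y] [MeasurableSingletonClass Y] [Nonempty Y]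
    (ν : Measure X) [SFinite ν] {e : ℕ → ℝ} {Q₀ : X → Y → Prop} {Q : ℕ → X → Y → Prop}
    (hinit : ∀ x, ∃ y, ∀ᶠ x' in 𝓝 x, Q₀ x' y ∧ Q 0 x' y)
    (hnext : ∀ n x y, Q n x y → ∃ y', dist y y' ≤ e n ∧ ∀ᶠ x' in 𝓝 x, Q (n + 1) x' y') :
    ∃ F : ℕ → X → Y, (∀ n, IsAEStep ν (F n)) ∧ (∀ x, Q₀ x (F 0 x)) ∧ (∀ n x, Q n x (F n x)) ∧
      ∀ n x, dist (F n x) (F (n + 1) x) ≤ e n := by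
  obtain ⟨F₀, hF₀, hQF₀⟩ := (IsAEStep.const ν ()).exists_refinement
    (Q := fun _ x y => Q₀ x y ∧ Q 0 x y) hinit
  have hstep : ∀ n (F : {F : X → Y // IsAEStep ν F ∧ ∀ x, Q n x (F x)}),
      ∃ G : {G : X → Y // IsAEStep ν G ∧ ∀ x, Q (n + 1) x (G x)},
        ∀ x, dist (F.1 x) (G.1 x) ≤ e n := by
    rintro n ⟨F, hF, hQF⟩
    obtain ⟨G, hG, hQG⟩ := hF.exists_refinement
      (Q := fun y x y' => dist y y' ≤ e n ∧ Q (n + 1) x y')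
      fun x => (hnext n x _ (hQF x)).imp fun _ hy => hy.2.mono fun _ => .intro hy.1
    exact ⟨⟨G, hG, fun x => (hQG x).2⟩, fun x => (hQG x).1⟩
  choose next hnext' using hstep
  let F : ∀ n, {F : X → Y // IsAEStep ν F ∧ ∀ x, Q n x (F x)} := fun n =>
    Nat.rec ⟨F₀, hF₀, fun x => (hQF₀ x).2⟩ next n
  exact ⟨fun n => (F n).1, fun n => (F n).2.1, fun x => (hQF₀ x).1, fun n => (F n).2.2,
    fun n => hnext' n (F n)⟩

theorem exists_ae_continuousAt_selection [MetricSpace Y] [CompleteSpace Y] [BorelSpace Y]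
    [Nonempty Y] (ν : Measure X) [SFinite ν] {e : ℝ} {Q₀ : X → Y → Prop}
    {Q : ℕ → X → Y → Prop}
    (hinit : ∀ x, ∃ y, ∀ᶠ x' in 𝓝 x, Q₀ x' y ∧ Q 0 x' y)
    (hnext : ∀ n x y, Q n x y → ∃ y', dist y y' ≤ e / 2 ^ n ∧ ∀ᶠ x' in 𝓝 x, Q (n + 1) x' y') :
    ∃ φ : X → Y, Measurable φ ∧ (∀ᵐ x ∂ν, ContinuousAt φ x) ∧ ∀ x, ∃ u : ℕ → Y,
      Q₀ x (u 0) ∧ (∀ n, Q n x (u n)) ∧ ∀ n, dist (u n) (φ x) ≤ 2 * e / 2 ^ n := by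
  obtain ⟨F, hF, hQ₀, hQ, hdist⟩ := exists_seq_isAEStep ν hinit hnext
  have hgeom : ∀ x n, dist (F n x) (F (n + 1) x) ≤ 2 * e / 2 / 2 ^ n := fun x n => by
    rw [mul_div_cancel_left₀ e two_ne_zero]
    exact hdist n x
  choose φ hφ using fun x => cauchySeq_tendsto_of_complete (cauchySeq_of_le_geometric_two (hgeom x))
  have hφdist : ∀ x n, dist (F n x) (φ x) ≤ 2 * e / 2 ^ n := fun x n =>
    dist_le_of_le_geometric_two_of_tendsto (hgeom x) (hφ x) n
  have hunif : TendstoUniformly F φ atTop := by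
    have hlim : Tendsto (fun n : ℕ => 2 * e / 2 ^ n) atTop (𝓝 0) :=
      tendsto_const_nhds.div_atTop (tendsto_pow_atTop_atTop_of_one_lt one_lt_two)
    refine Metric.tendstoUniformly_iff.2 fun ε hε => ?_
    filter_upwards [hlim.eventually_lt_const hε] with n hn x
    rw [dist_comm]
    exact (hφdist x n).trans_lt hn
  have hφmeas : Measurable φ :=
    measurable_of_tendsto_metrizable (fun n => (hF n).measurable) (tendsto_pi_nhds.2 hφ)
  refine ⟨φ, hφmeas, ?_, fun x => ⟨fun n => F n x, hQ₀ x, fun n => hQ n x, hφdist x⟩⟩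
  filter_upwards [ae_all_iff.2 fun n => (hF n).ae_eventually_eq] with x hx
  refine continuousAt_of_locally_uniform_approx_of_continuousAt fun u hu => ?_
  obtain ⟨n, hn⟩ := (hunif u hu).exists
  have hFn : ContinuousAt (F n) x := continuousAt_const.congr ((hx n).mono fun _ => .symm)
  exact ⟨Set.univ, univ_mem, F n, hFn, fun y _ => hn y⟩

end selection

theorem WeylAP.exists_selection {X Y : Type*} [MetricSpace X] [CompleteSpace X] [MetricSpace Y]
    [CompleteSpace Y] [SecondCountableTopology Y] [Nonempty Y] {h : ℝ → X}
    (hh : StronglyMeasurable h) (hw : WeylAP h) {e : ℝ} {Q₀ : X → Y → Prop} {Q : ℕ → X → Y → Prop}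
    (hinit : ∀ x, ∃ y, ∀ᶠ x' in 𝓝 x, Q₀ x' y ∧ Q 0 x' y)
    (hnext : ∀ n x y, Q n x y → ∃ y', dist y y' ≤ e / 2 ^ n ∧ ∀ᶠ x' in 𝓝 x, Q (n + 1) x' y') :
    ∃ f : ℝ → Y, StronglyMeasurable f ∧ WeylAP f ∧
      (∀ τ : ℕ → ℝ, Tendsto (fun j => shiftDist h (τ j)) atTop (𝓝 0) →
        Tendsto (fun j => shiftDist f (τ j)) atTop (𝓝 0)) ∧
      ∀ t, ∃ u : ℕ → Y, Q₀ (h t) (u 0) ∧ (∀ n, Q n (h t) (u n)) ∧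
        ∀ n, dist (u n) (f t) ≤ 2 * e / 2 ^ n := by
  -- `X` need not be separable, but `h` takes its values in a separable closed subspace.
  let S : Type _ := closure (Set.range h)
  have : CompleteSpace S := isClosed_closure.completeSpace_coe
  have : SeparableSpace S := hh.isSeparable_range.closure.separableSpace
  have := UniformSpace.secondCountable_of_separable S
  let k : ℝ → S := fun t => ⟨h t, subset_closure (Set.mem_range_self t)⟩
  have hk : StronglyMeasurable k :=
    (Embedding.comp_stronglyMeasurable_iff IsEmbedding.subtypeVal).1 hh
  borelize S Y
  have hkw : WeylAP k := hw
  obtain ⟨ν, hν⟩ := hkw.exists_boundsFrequencies hk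
  have hval (x : S) : Tendsto ((↑) : S → X) (𝓝 x) (𝓝 x) := continuous_subtype_val.tendsto x
  obtain ⟨φ, hφ, hφc, hφQ⟩ := exists_ae_continuousAt_selection (ν : Measure S)
    (Q₀ := fun x => Q₀ x) (Q := fun n x => Q n x)
    (fun x => (hinit x).imp fun _ hy => (hval x).eventually hy)
    fun n x y hy => (hnext n x y hy).imp fun _ hy' => hy'.imp_right (hval x).eventually
  exact ⟨φ ∘ k, (hφ.comp hk.measurable).stronglyMeasurable, hν.weylAP_comp hk hkw hφc,
    fun τ hτ => hν.tendsto_shiftDist_comp hk hφc hτ, fun t => hφQ (k t)⟩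

section support

variable {U : Type*} [PseudoMetricSpace U] [MeasurableSpace U] {δ κ : ℝ}

theorem measSupport_eq_support (μ : Measure U) : measSupport μ = μ.support := by
  ext x
  simp only [Measure.support_eq_forall_isOpen, measSupport, Set.mem_ofPred_eq]
  exact forall_congr' fun V => ⟨fun h hx hV => h hV hx, fun h hV hx => h hx hV⟩

theorem measure_ball_pos_of_mem_measSupport {μ : Measure U} {y : U} (hy : y ∈ measSupport μ)
    {r : ℝ} (hr : 0 < r) : 0 < μ (Metric.ball y r) :=
  hy _ Metric.isOpen_ball (Metric.mem_ball_self hr)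

theorem exists_mem_measSupport_of_measure_pos [SecondCountableTopology U] {μ : Measure U}
    {s : Set U} (hs : 0 < μ s) : ∃ y ∈ s, y ∈ measSupport μ := by
  rw [measSupport_eq_support]
  exact Measure.nonempty_inter_support_of_pos hs

theorem mem_measSupport_of_tendsto {μ : Measure U} {u : ℕ → U} {r : ℕ → ℝ} {y : U}
    (hu : Tendsto u atTop (𝓝 y)) (hr : Tendsto r atTop (𝓝 0))
    (hpos : ∀ n, 0 < μ (Metric.ball (u n) (r n))) : y ∈ measSupport μ := by
  intro V hV hyV
  obtain ⟨s, hs, hsV⟩ := Metric.isOpen_iff.1 hV y hyV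
  obtain ⟨n, hn, hn'⟩ := ((Metric.tendsto_nhds.1 hu _ (half_pos hs)).and
    (hr.eventually_lt_const (half_pos hs))).exists
  exact (hpos n).trans_le (measure_mono ((Metric.ball_subset_ball' (by linarith)).trans hsV))

theorem setOf_lt_measure_ball_nonempty (P : ProbabilityMeasure U) (u : U) (hδ : δ < 1) :
    {r : ℝ | 0 < r ∧ ENNReal.ofReal δ < (P : Measure U) (Metric.ball u r)}.Nonempty := by
  have hlim : Tendsto (fun n : ℕ => (P : Measure U) (Metric.ball u n)) atTop (𝓝 1) := by
    rw [← measure_univ (μ := (P : Measure U)), ← Metric.iUnion_ball_nat u]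
    exact tendsto_measure_iUnion_atTop fun _ _ hle => Metric.ball_subset_ball (Nat.cast_le.2 hle)
  obtain ⟨n, hn, hn₀⟩ := ((hlim.eventually_const_lt (ENNReal.ofReal_lt_one.2 hδ)).and
    (eventually_gt_atTop 0)).exists
  exact ⟨n, Nat.cast_pos.2 hn₀, hn⟩

variable [BorelSpace U]

theorem eventually_measure_pos_of_isOpen {P : LevyProkhorov (ProbabilityMeasure U)} {G : Set U}
    (hG : IsOpen G) (hP : 0 < (P.toMeasure : Measure U) G) :
    ∀ᶠ P' in 𝓝 P, 0 < (P'.toMeasure : Measure U) G :=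
  eventually_lt_of_lt_liminf <| hP.trans_le <|
    ProbabilityMeasure.le_liminf_measure_open_of_tendsto
      (LevyProkhorov.continuous_toMeasure_probabilityMeasure.tendsto P) hG

theorem rdelta_le_add {P P' : LevyProkhorov (ProbabilityMeasure U)} {u u' : U} {δ' : ℝ}
    (hδ' : 0 ≤ δ') (hκ : δ' + κ ≤ δ) (hδ : δ < 1) (hP : dist P P' < κ) (hu : dist u u' < κ) :
    rdelta u (P.toMeasure : Measure U) δ' ≤ rdelta u' (P'.toMeasure : Measure U) δ + 2 * κ := by
  have hκ₀ : 0 < κ := dist_nonneg.trans_lt hP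
  rw [← sub_le_iff_le_add]
  refine le_csInf (setOf_lt_measure_ball_nonempty _ _ hδ) fun r ⟨hr, hlt⟩ => ?_
  rw [sub_le_iff_le_add]
  refine csInf_le ⟨0, fun r hr => hr.1.le⟩ ⟨by positivity, ?_⟩
  have hball : Metric.thickening κ (Metric.ball u' r) ⊆ Metric.ball u (r + 2 * κ) :=
    (Metric.thickening_ball ..).trans <| Metric.ball_subset_ball' <| by
      rw [dist_comm]
      linarith
  have hmeas := calc ENNReal.ofReal δ' + ENNReal.ofReal κ
    _ = ENNReal.ofReal (δ' + κ) := (ENNReal.ofReal_add hδ' hκ₀.le).symm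
    _ ≤ ENNReal.ofReal δ := ENNReal.ofReal_le_ofReal hκ
    _ < (P'.toMeasure : Measure U) (Metric.ball u' r) := hlt
    _ ≤ (P.toMeasure : Measure U) (Metric.thickening κ (Metric.ball u' r)) + ENNReal.ofReal κ :=
        levyProkhorov_measure_le_thickening_add (by rwa [dist_comm]) measurableSet_ball
    _ ≤ (P.toMeasure : Measure U) (Metric.ball u (r + 2 * κ)) + ENNReal.ofReal κ := by gcongr
  exact lt_of_add_lt_add_right hmeas

variable [SecondCountableTopology U]

theorem exists_eventually_dist_lt_rdelta (hδ₀ : 0 < δ) (hδ₁ : δ < 1)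
    (x : U × LevyProkhorov (ProbabilityMeasure U)) :
    ∃ y ∈ measSupport (x.2.toMeasure : Measure U), ∀ᶠ x' in 𝓝 x,
      dist y x'.1 + 2 * (δ / 8) < rdelta x'.1 (x'.2.toMeasure : Measure U) δ + δ := by
  obtain ⟨r, ⟨-, hr⟩, hrlt⟩ := exists_lt_of_csInf_lt
    (setOf_lt_measure_ball_nonempty x.2.toMeasure x.1 (by linarith : δ / 2 < 1))
    (lt_add_of_pos_right (rdelta x.1 (x.2.toMeasure : Measure U) (δ / 2)) (by linarith : 0 < δ / 8))
  obtain ⟨y, hy, hysupp⟩ := exists_mem_measSupport_of_measure_pos (pos_of_gt hr)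
  refine ⟨y, hysupp, ?_⟩
  filter_upwards [Metric.ball_mem_nhds x (by linarith : 0 < δ / 8)] with x' hx'
  rw [Metric.mem_ball, dist_comm, Prod.dist_eq, max_lt_iff] at hx'
  have hrdelta := rdelta_le_add (δ := δ) (δ' := δ / 2) (by linarith) (by linarith) hδ₁ hx'.2 hx'.1
  linarith [dist_triangle y x.1 x'.1, hx'.1, Metric.mem_ball.1 hy]

theorem exists_dist_lt_eventually_measure_ball_pos {x : U × LevyProkhorov (ProbabilityMeasure U)}
    {u : U} {r s : ℝ} (hr : 0 < (x.2.toMeasure : Measure U) (Metric.ball u r)) (hs : 0 < s) :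
    ∃ y, dist u y ≤ r ∧ ∀ᶠ x' in 𝓝 x, 0 < (x'.2.toMeasure : Measure U) (Metric.ball y s) := by
  obtain ⟨y, hy, hysupp⟩ := exists_mem_measSupport_of_measure_pos hr
  exact ⟨y, (Metric.mem_ball'.1 hy).le, continuous_snd.continuousAt.eventually <|
    eventually_measure_pos_of_isOpen Metric.isOpen_ball
      (measure_ball_pos_of_mem_measSupport hysupp hs)⟩

end support

theorem exists_weylAP_selection {U : Type*} [MetricSpace U] [CompleteSpace U]
    [SecondCountableTopology U] [MeasurableSpace U] [BorelSpace U] {δ : ℝ} {g : ℝ → U}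
    {m : ℝ → LevyProkhorov (ProbabilityMeasure U)} (hg : StronglyMeasurable g)
    (hm : StronglyMeasurable m) (hgw : WeylAP g) (hmw : WeylAP m) (hδ₀ : 0 < δ) (hδ₁ : δ < 1) :
    ∃ f : ℝ → U, StronglyMeasurable f ∧ WeylAP f ∧
      (∀ τ : ℕ → ℝ, Tendsto (fun j => shiftDist g (τ j)) atTop (𝓝 0) →
        Tendsto (fun j => shiftDist m (τ j)) atTop (𝓝 0) →
          Tendsto (fun j => shiftDist f (τ j)) atTop (𝓝 0)) ∧
      ∀ t, f t ∈ measSupport ((m t).toMeasure : Measure U) ∧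
        dist (f t) (g t) < rdelta (g t) ((m t).toMeasure : Measure U) δ + δ := by
  have : Nonempty U := ⟨g 0⟩
  have := completeSpace_levyProkhorov_probabilityMeasure (Ω := U)
  obtain ⟨f, hf, hfw, hfτ, hfsel⟩ := (hgw.prodMk hg hm hmw).exists_selection (hg.prodMk hm)
    (e := δ / 8)
    (Q₀ := fun x y => dist y x.1 + 2 * (δ / 8) < rdelta x.1 (x.2.toMeasure : Measure U) δ + δ)
    (Q := fun n x y => 0 < (x.2.toMeasure : Measure U) (Metric.ball y (δ / 8 / 2 ^ n)))
    (fun x => by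
      obtain ⟨y, hy, hlt⟩ := exists_eventually_dist_lt_rdelta hδ₀ hδ₁ x
      exact ⟨y, hlt.and <| continuous_snd.continuousAt.eventually <|
        eventually_measure_pos_of_isOpen Metric.isOpen_ball
          (measure_ball_pos_of_mem_measSupport hy (by positivity))⟩)
    fun n x u hu => exists_dist_lt_eventually_measure_ball_pos hu (by positivity)
  refine ⟨f, hf, hfw, fun τ hgτ hmτ => hfτ τ ?_, fun t => ?_⟩
  · refine tendsto_of_tendsto_of_tendsto_of_le_of_le tendsto_const_nhds (by simpa using hgτ.add hmτ)
      (fun _ => zero_le) fun j => shiftDist_le_add fun l => shiftDistL_prodMk_le hg m l (τ j)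
  · obtain ⟨u, hu₀, hpos, hdist⟩ := hfsel t
    have hlim (c : ℝ) : Tendsto (fun n : ℕ => c / 2 ^ n) atTop (𝓝 0) :=
      tendsto_const_nhds.div_atTop (tendsto_pow_atTop_atTop_of_one_lt one_lt_two)
    refine ⟨mem_measSupport_of_tendsto ?_ (hlim (δ / 8)) hpos, ?_⟩
    · exact tendsto_iff_dist_tendsto_zero.2 (squeeze_zero (fun _ => dist_nonneg) hdist (hlim _))
    · have hdist₀ := hdist 0
      rw [pow_zero, div_one, dist_comm] at hdist₀
      exact (dist_triangle _ (u 0) _).trans_lt (by linarith)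

section modification

variable {α β X : Type*} [PseudoMetricSpace X] {d : α → α → ℝ} {d' : β → β → ℝ}
  {f : ℝ → α} {k : ℝ → β} {h : ℝ → X} {N : ℝ → Prop}

theorem weylD_shift_congr (hN : ∀ᵐ t, N t)
    (hfk : ∀ t t', N t → N t' → d (f t) (f t') = d' (k t) (k t')) (p l s : ℝ) :
    weylD d p l f (fun t => f (t + s)) = weylD d' p l k fun t => k (t + s) := by
  have hNs : ∀ᵐ t, N (t + s) :=
    (measurePreserving_add_right volume s).quasiMeasurePreserving.ae hN
  simp only [weylD]
  congr! 4 with ξ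
  refine lintegral_congr_ae (ae_restrict_of_ae ?_)
  filter_upwards [hN, hNs] with t ht hts
  rw [hfk t (t + s) ht hts]

theorem weylAP_of_forall_relDense (hN : ∀ᵐ t, N t)
    (hfh : ∀ t t', N t → N t' → d (f t) (f t') = bdist (h t) (h t'))
    (hf : ∀ ε > 0, ∃ l > 0, RelDense (APeriodsL d 1 l ε f)) : WeylAP h := by
  simpa only [WeylAP, APeriodsL, weylD_shift_congr hN hfh] using hf

theorem mem_WMod_of_norm_fourierChar_sub_one_le (hN : ∀ᵐ t, N t)
    (hfh : ∀ t t', N t → N t' → d (f t) (f t') = bdist (h t) (h t'))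
    (hh : StronglyMeasurable h) {a C : ℝ}
    (ha : ∀ τ, ‖(𝐞 (τ * a) : ℂ) - 1‖ ≤ C * shiftSeminorm hh τ) : 2 * Real.pi * a ∈ WMod d f := by
  intro τ hτ
  simp only [weylDinf, weylD_shift_congr hN hfh] at hτ
  have hsemi : Tendsto (fun j => shiftSeminorm hh (τ j)) atTop (𝓝 0) :=
    (ENNReal.tendsto_toReal ENNReal.zero_ne_top).comp hτ
  refine tendsto_iff_norm_sub_tendsto_zero.2 <|
    squeeze_zero (fun _ => norm_nonneg _) (fun j => ?_) (by simpa using hsemi.const_mul C)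
  rw [norm_exp_sub_one_eq_norm_fourierChar, mul_div_cancel_left₀ _ Real.two_pi_pos.ne']
  exact ha (τ j)

end modification

theorem tendsto_shiftDist_of_shiftSeminorm {X : Type*} [PseudoMetricSpace X] {h : ℝ → X}
    (hh : StronglyMeasurable h) {τ : ℕ → ℝ}
    (hτ : Tendsto (fun j => shiftSeminorm hh (τ j)) atTop (𝓝 0)) :
    Tendsto (fun j => shiftDist h (τ j)) atTop (𝓝 0) := by
  simpa only [shiftSeminorm_apply, ENNReal.ofReal_toReal (shiftDist_ne_top h _),
    ENNReal.ofReal_zero] using ENNReal.tendsto_ofReal hτ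

theorem WeylAP.exists_frequency_add {X Y Z : Type*} [PseudoMetricSpace X] [PseudoMetricSpace Y]
    [PseudoMetricSpace Z] {g : ℝ → X} {m : ℝ → Y} {f : ℝ → Z} (hg : StronglyMeasurable g)
    (hm : StronglyMeasurable m) (hgw : WeylAP g) (hmw : WeylAP m)
    (hf : ∀ τ : ℕ → ℝ, Tendsto (fun j => shiftDist g (τ j)) atTop (𝓝 0) →
      Tendsto (fun j => shiftDist m (τ j)) atTop (𝓝 0) →
        Tendsto (fun j => shiftDist f (τ j)) atTop (𝓝 0))
    {lam : ℝ} (hlam : lam ∈ WMod bdist f) :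
    ∃ a b C : ℝ, 2 * Real.pi * a + 2 * Real.pi * b = lam ∧
      ∀ τ, ‖(𝐞 (τ * a) : ℂ) - 1‖ ≤ C * shiftSeminorm hg τ ∧
        ‖(𝐞 (τ * b) : ℂ) - 1‖ ≤ C * shiftSeminorm hm τ := by
  obtain ⟨a, b, C, hab, hC⟩ := exists_add_eq_of_forall_tendsto
    (hgw.isAlmostPeriodicSeminorm_shiftSeminorm hg) (hmw.isAlmostPeriodicSeminorm_shiftSeminorm hm)
    (ν := lam / (2 * Real.pi)) fun τ hgτ hmτ => by
      have hexp := hlam τ <| hf τ (tendsto_shiftDist_of_shiftSeminorm hg hgτ)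
        (tendsto_shiftDist_of_shiftSeminorm hm hmτ)
      rw [tendsto_iff_norm_sub_tendsto_zero] at hexp ⊢
      simpa only [norm_exp_sub_one_eq_norm_fourierChar] using hexp
  exact ⟨a, b, C, by rw [← mul_add, hab, mul_div_cancel₀ _ Real.two_pi_pos.ne'], hC⟩

theorem lpDist_le_one {U : Type*} [MeasurableSpace U] [PseudoEMetricSpace U]
    (P Q : ProbabilityMeasure U) : lpDist P Q ≤ 1 := by
  have hle := levyProkhorovEDist_le_max_measure_univ (P : Measure U) Q
  rw [measure_univ, measure_univ, max_self] at hle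
  exact ENNReal.toReal_mono ENNReal.one_ne_top hle

theorem MemMp.of_stronglyMeasurable {X : Type*} [PseudoMetricSpace X] {f : ℝ → X}
    (hf : StronglyMeasurable f) (x₀ : X) : MemMp bdist 1 x₀ f := by
  refine ⟨hf.aestronglyMeasurable, 1, fun ξ => ?_⟩
  calc ∫⁻ t in Set.Icc ξ (ξ + 1), ENNReal.ofReal (bdist (f t) x₀ ^ (1 : ℝ))
    _ ≤ ∫⁻ _ in Set.Icc ξ (ξ + 1), 1 := lintegral_mono fun t => by
        rw [Real.rpow_one]
        exact ENNReal.ofReal_le_one.2 (bdist_le_one _ _)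
    _ = ENNReal.ofReal 1 := by simp

/-- **Theorem 2 (selections of supports of Weyl a.p. measure-valued functions).**
Let `(U,ρ)` be a complete separable metric space, `g ∈ W(ℝ,U)`,
`μ[·;·] ∈ W₁(ℝ, 𝓜(U))` (Weyl a.p. w.r.t. the Lévy–Prokhorov metric).  Then for every
`δ ∈ (0,1)` there is `f_δ ∈ W(ℝ,U)` with `Mod f_δ ⊆ Mod g + Mod μ[·;·]`,
`f_δ(t) ∈ supp μ[·;t]` a.e. and `ρ(f_δ(t), g(t)) < r_δ(g(t), μ[·;t]) + δ` a.e. -/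
theorem weyl_ap_measure_selection {U : Type*} [MetricSpace U] [CompleteSpace U]
    [TopologicalSpace.SeparableSpace U] [MeasurableSpace U] [BorelSpace U] (x₀ : U)
    (g : ℝ → U) (hg : MemWp bdist 1 x₀ g)
    (μ : ℝ → ProbabilityMeasure U)
    (hμ : MemWp lpDist 1
      (⟨MeasureTheory.Measure.dirac x₀, inferInstance⟩ : ProbabilityMeasure U) μ)
    (δ : ℝ) (hδ0 : 0 < δ) (hδ1 : δ < 1) :
    ∃ f : ℝ → U, MemWp bdist 1 x₀ f ∧
      WMod bdist f ⊆ WMod bdist g + WMod (fun μ' ν' => min 1 (lpDist μ' ν')) μ ∧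
      (∀ᵐ t ∂(volume : Measure ℝ), f t ∈ measSupport (μ t : Measure U)) ∧
      (∀ᵐ t ∂(volume : Measure ℝ),
        dist (f t) (g t) < rdelta (g t) (μ t : Measure U) δ + δ) := by
  have := UniformSpace.secondCountable_of_separable U
  obtain ⟨⟨⟨g', hg', hgg'⟩, -⟩, hgw⟩ := hg
  obtain ⟨⟨⟨μ', hμ', hμμ'⟩, -⟩, hμw⟩ := hμ
  let m : ℝ → LevyProkhorov (ProbabilityMeasure U) := fun t => .ofMeasure (μ' t)
  have hm : StronglyMeasurable m :=
    (LevyProkhorov.probabilityMeasureHomeomorph (Ω := U)).continuous.comp_stronglyMeasurable hμ'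
  have hgd (t t' : ℝ) (ht : g t = g' t) (ht' : g t' = g' t') :
      bdist (g t) (g t') = bdist (g' t) (g' t') := by rw [ht, ht']
  have hμd (t t' : ℝ) (ht : μ t = μ' t) (ht' : μ t' = μ' t') :
      min 1 (lpDist (μ t) (μ t')) = bdist (m t) (m t') := by rw [ht, ht']; rfl
  have hgw' : WeylAP g' := weylAP_of_forall_relDense hgg' hgd hgw
  have hmw : WeylAP m := weylAP_of_forall_relDense hμμ'
    (fun t t' ht ht' => (min_eq_right (lpDist_le_one _ _)).symm.trans (hμd t t' ht ht')) hμw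
  obtain ⟨f, hf, hfw, hfτ, hsel⟩ := exists_weylAP_selection hg' hm hgw' hmw hδ0 hδ1
  refine ⟨f, ⟨.of_stronglyMeasurable hf x₀, hfw⟩, fun lam hlam => ?_, ?_, ?_⟩
  · obtain ⟨a, b, C, rfl, hC⟩ := hgw'.exists_frequency_add hg' hm hmw hfτ hlam
    exact Set.add_mem_add
      (mem_WMod_of_norm_fourierChar_sub_one_le hgg' hgd hg' fun τ => (hC τ).1)
      (mem_WMod_of_norm_fourierChar_sub_one_le hμμ' hμd hm fun τ => (hC τ).2)
  · filter_upwards [hμμ'] with t hμt using hμt ▸ (hsel t).1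
  · filter_upwards [hgg', hμμ'] with t hgt hμt using hgt ▸ hμt ▸ (hsel t).2
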